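/- Assume Schanuel's Conjecture. If f and g are irreducible elements of 𝓔 such that f is not a unit of 𝓔 times g (i.e. f and g are distinct irreducibles up to units), then f and g have at most finitely many common zeros in ℂ. -/

import Mathlib

open Complex Set

noncomputable section

/-- `f` is an exponential polynomial, i.e. an element of the ring `𝓔`. -/
def IsExpPoly (f : ℂ → ℂ) : Prop :=
  ∃ (N : ℕ) (lam mu : Fin N → ℂ),
    ∀ z : ℂ, f z = ∑ i, lam i * Complex.exp (mu i * z)

/-- `h` divides `f` in the ring `𝓔`. -/
def EDvd (h f : ℂ → ℂ) : Prop :=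
  ∃ q : ℂ → ℂ, IsExpPoly q ∧ f = h * q

/-- `f` is a unit of the ring `𝓔`. -/
def EUnit (f : ℂ → ℂ) : Prop :=
  IsExpPoly f ∧ ∃ g : ℂ → ℂ, IsExpPoly g ∧ f * g = 1

/-- `f` is irreducible in the ring `𝓔`. -/
def EIrreducible (f : ℂ → ℂ) : Prop :=
  IsExpPoly f ∧ f ≠ 0 ∧ ¬ EUnit f ∧
    ∀ g h : ℂ → ℂ, IsExpPoly g → IsExpPoly h → f = g * h → EUnit g ∨ EUnit h

/-- canonical representation: pairwise distinct exponents, nonzero coefficients. -/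
def IsCanonicalRep (f : ℂ → ℂ) {N : ℕ} (lam mu : Fin N → ℂ) : Prop :=
  (∀ i, lam i ≠ 0) ∧ Function.Injective mu ∧
    ∀ z : ℂ, f z = ∑ i, lam i * Complex.exp (mu i * z)

/-- `f` is a simple exponential polynomial: its support has `ℚ`-dimension 1. -/
def IsSimple (f : ℂ → ℂ) : Prop :=
  ∃ (N : ℕ) (lam mu : Fin N → ℂ), IsCanonicalRep f lam mu ∧
    Module.finrank ℚ (Submodule.span ℚ (Set.range mu)) = 1

/-- Transcendence degree over `ℚ` of (the field generated by) a set of complex numbers. -/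
noncomputable def trdegQ (s : Set ℂ) : Cardinal.{0} :=
  ⨆ t : {t : Finset ℂ // ↑t ⊆ s ∧ AlgebraicIndependent ℚ (Subtype.val : {x : ℂ // x ∈ t} → ℂ)},
    (t.1.card : Cardinal)

/-- Schanuel's Conjecture. -/
def SchanuelConjecture : Prop :=
  ∀ (n : ℕ) (lam : Fin n → ℂ), LinearIndependent ℚ lam →
    (n : Cardinal) ≤ trdegQ (Set.range lam ∪ Set.range fun i => Complex.exp (lam i))

/-!
Let `f` and `g` be coprime exponential polynomials, with frequencies in a finite set `Λ`. Under
Schanuel's Conjecture the predimension of a finite set `T`, that is, the transcendence degree of `T`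
and `exp (Λ T)` over the constants minus the `ℚ`-dimension of `U = span (Λ T)`, attains a minimum.
For minimal `T`, adding a common zero `s` cannot lower it. If `μ ↦ μ s` is injective modulo `U` on
the span of `Λ`, then all but one of the numbers `exp (v i * s)`, for a basis `v` of the lattice
spanned by `Λ`, are algebraically independent, and the single polynomial relation between them is a
common factor of `f` and `g`. Otherwise `s` is algebraic over the data of `T`, and the terms of `f`
cannot cancel unless `(μ - ν) s ∈ U` for two of its frequencies `μ ≠ ν`. Hence the common zeros lie
in finitely many finite-dimensional `ℚ`-subspaces of `ℂ`.

Suppose that one of these contains an infinite set of common zeros, thinned out so that all its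
infinite subsets have the same direction `U`. Differentiating the vanishing sums, with a derivation
of `ℂ` that kills none of the finitely many relevant transcendental numbers `exp (w u)`, and a
valuation argument show that, up to finitely many exceptions, they split along the cosets of the
group of frequencies `w` with `exp (w u)` algebraic for all `u ∈ U`. By the four exponentials
statement, which follows from Schanuel's Conjecture, either this group has rank at most one, or the
zeros lie on a rational line `s₀ + ℚ u`. On such a line the values are sums of powers of algebraic
numbers with rational exponents; Kummer theory bounds the denominators and the Skolem–Mahler–Lech
theorem splits the sums further, along the frequencies `w` with `exp (w u)` a root of unity, which
have rank at most one. If the sums split at `s` along a group of rank one, then some `exp (w z) -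
exp (w s)` is a common factor of `f` and `g`.
-/

section SkolemMahlerLech

open Filter Topology Polynomial

lemma exists_forall_gt_norm_lt {E : Type*} [NormedAddCommGroup E] {g : ℕ → E}
    (hg : Tendsto g atTop (𝓝 0)) {m : ℕ} (hm : g m ≠ 0) :
    ∃ N, g N ≠ 0 ∧ ∀ i, N < i → ‖g i‖ < ‖g N‖ := by
  have finite_large : {i | ‖g m‖ ≤ ‖g i‖}.Finite := by
    have := (tendsto_zero_iff_norm_tendsto_zero.mp hg).eventually
      (gt_mem_nhds (norm_pos_iff.mpr hm))
    rw [← Nat.cofinite_eq_atTop, eventually_cofinite] at this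
    simpa only [not_lt] using this
  obtain ⟨N, hN, N_max⟩ := finite_large.exists_maximal ⟨m, by simp⟩
  refine ⟨N, norm_pos_iff.mp ((norm_pos_iff.mpr hm).trans_le hN), fun i hi ↦ ?_⟩
  exact (not_le.mp fun h ↦ hi.not_ge (N_max h hi.le)).trans_le hN

lemma exists_dividedDifference_descFactorial (K : Type*) [Field K] [CharZero K] {T : Finset ℕ}
    {N : ℕ} (hT : T.card = N + 1) :
    ∃ (w : ℕ → K) (Λ : ℕ → ℤ), (∀ i, ∑ k ∈ T, (k.descFactorial i : K) * w k = Λ i) ∧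
      (∀ i < N, Λ i = 0) ∧ Λ N = 1 := by
  let Q : ℤ[X] := Lagrange.nodal T (fun k ↦ (k : ℤ))
  have Q_monic : Q.Monic := Lagrange.nodal_monic
  have degree_Q : Q.degree = T.card := Lagrange.degree_nodal
  let R (i : ℕ) : ℤ[X] := descPochhammer ℤ i %ₘ Q
  have eval_R (i : ℕ) {k : ℕ} (hk : k ∈ T) : (R i).eval (k : ℤ) = k.descFactorial i := by
    have := congr($(modByMonic_add_div (descPochhammer ℤ i) Q).eval (k : ℤ))
    rwa [eval_add, eval_mul, Lagrange.eval_nodal_at_node hk, zero_mul, add_zero,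
      descPochhammer_eval_eq_descFactorial] at this
  have R_eq {i : ℕ} (hi : i ≤ N) : R i = descPochhammer ℤ i := by
    rw [modByMonic_eq_self_iff Q_monic, degree_Q, hT,
      degree_eq_natDegree (monic_descPochhammer ℤ i).ne_zero, descPochhammer_natDegree]
    exact_mod_cast Nat.lt_succ_of_le hi
  refine ⟨fun k ↦ (Lagrange.basis T (fun k ↦ (k : K)) k).coeff N, fun i ↦ (R i).coeff N,
    fun i ↦ ?_, fun i hi ↦ ?_, ?_⟩
  · have interpolation : (R i).map (Int.castRingHom K) =
        Lagrange.interpolate T (fun k ↦ (k : K)) fun k ↦ (k.descFactorial i : K) := by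
      refine Lagrange.eq_interpolate_of_eval_eq _ Nat.cast_injective.injOn ?_ fun k hk ↦ ?_
      · exact degree_map_le.trans_lt (degree_Q ▸ degree_modByMonic_lt _ Q_monic)
      · simpa only [eq_intCast, Int.cast_natCast, eval_R i hk] using
          eval_map_apply (p := R i) (Int.castRingHom K) (k : ℤ)
    have := congr($(interpolation).coeff N)
    simpa [Lagrange.interpolate_apply, finsetSum_coeff] using this.symm
  · simp only [R_eq hi.le]
    exact coeff_eq_zero_of_natDegree_lt (by rwa [descPochhammer_natDegree])
  · simpa only [R_eq le_rfl, Monic, leadingCoeff, descPochhammer_natDegree] using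
      monic_descPochhammer ℤ N

-- Strassmann's theorem for Newton series: the divided difference at `N + 1` zeros isolates the
-- last coefficient `g N` of maximal norm.
lemma eq_zero_of_infinite_newtonSeries_eq_zero {K : Type*} [NormedField K] [IsUltrametricDist K]
    [CharZero K] {g : ℕ → K} (hg : Tendsto g atTop (𝓝 0))
    (hinf : {k : ℕ | ∑ i ∈ Finset.range (k + 1), g i * k.descFactorial i = 0}.Infinite) (m : ℕ) :
    g m = 0 := by
  by_contra hm
  obtain ⟨N, hN, norm_lt⟩ := exists_forall_gt_norm_lt hg hm
  obtain ⟨T, hTs, hTc⟩ := hinf.exists_subset_card_eq (N + 1)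
  obtain ⟨w, Λ, hΛ, Λ_lt, Λ_N⟩ := exists_dividedDifference_descFactorial K hTc
  let B := T.sup id + N + 1
  have sum_eq_zero {k : ℕ} (hk : k ∈ T) : ∑ i ∈ Finset.range B, g i * k.descFactorial i = 0 := by
    have hkB : k + 1 ≤ B := by have : k ≤ T.sup id := Finset.le_sup (f := id) hk; omega
    rw [← Finset.sum_subset (Finset.range_mono hkB)]
    · exact hTs hk
    · intro i _ hi
      rw [Nat.descFactorial_of_lt (by simpa using hi), Nat.cast_zero, mul_zero]
  have sum_mul_Λ : ∑ i ∈ Finset.range B, g i * Λ i = 0 := by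
    simp_rw [← hΛ, Finset.mul_sum]
    rw [Finset.sum_comm]
    refine Finset.sum_eq_zero fun k hk ↦ ?_
    simp_rw [← mul_assoc]
    rw [← Finset.sum_mul, sum_eq_zero hk, zero_mul]
  rw [← Finset.sum_erase_add _ _ (show N ∈ Finset.range B by simp [B]), Λ_N, Int.cast_one,
    mul_one, ← eq_neg_iff_add_eq_zero] at sum_mul_Λ
  obtain ⟨i, hi, hle⟩ := IsUltrametricDist.exists_norm_finsetSum_le ((Finset.range B).erase N)
    fun i ↦ g i * (Λ i : K)
  have erase_nonempty : ((Finset.range B).erase N).Nonempty := by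
    by_contra h
    rw [Finset.not_nonempty_iff_eq_empty.mp h, Finset.sum_empty, zero_eq_neg] at sum_mul_Λ
    exact hN sum_mul_Λ
  rw [sum_mul_Λ, norm_neg, norm_mul] at hle
  rcases (Finset.ne_of_mem_erase (hi erase_nonempty)).lt_or_gt with hlt | hgt
  · rw [Λ_lt i hlt, Int.cast_zero, norm_zero, mul_zero] at hle
    exact hN (norm_le_zero_iff.mp hle)
  · refine (norm_lt i hgt).not_ge (hle.trans ?_)
    exact mul_le_of_le_one_right (norm_nonneg _) (IsUltrametricDist.norm_intCast_le_one K _)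

lemma two_mul_padicValNat_factorial_le {p : ℕ} [Fact p.Prime] (hp : 3 ≤ p) (i : ℕ) :
    2 * padicValNat p i.factorial ≤ i := by
  have := sub_one_mul_padicValNat_factorial (p := p) i
  calc 2 * padicValNat p i.factorial ≤ (p - 1) * padicValNat p i.factorial :=
        Nat.mul_le_mul_right _ (by omega)
    _ ≤ i := by omega

lemma tendsto_padic_pow_mul_div_factorial {p : ℕ} [Fact p.Prime] (hp : 3 ≤ p) (c : ℕ → ℤ) :
    Tendsto (fun i ↦ (p : ℚ_[p]) ^ i * c i / (i.factorial : ℚ_[p])) atTop (𝓝 0) := by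
  have hp1 : (1 : ℝ) < p := by norm_cast; omega
  have norm_le (i : ℕ) : ‖(p : ℚ_[p]) ^ i * c i / (i.factorial : ℚ_[p])‖ ≤ (p : ℝ)⁻¹ ^ (i / 2) := by
    have norm_factorial : ‖(i.factorial : ℚ_[p])‖ = (p : ℝ)⁻¹ ^ padicValNat p i.factorial := by
      rw [Padic.norm_eq_zpow_neg_valuation (by exact_mod_cast i.factorial_ne_zero),
        Padic.valuation_natCast, zpow_neg, zpow_natCast, inv_pow]
    have two_mul_le := two_mul_padicValNat_factorial_le hp i
    rw [norm_div, norm_mul, norm_pow, Padic.norm_p, norm_factorial, div_le_iff₀ (by positivity),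
      ← pow_add]
    calc (p : ℝ)⁻¹ ^ i * ‖(c i : ℚ_[p])‖ ≤ (p : ℝ)⁻¹ ^ i * 1 := by
          gcongr; exact Padic.norm_int_le_one _
      _ ≤ _ := by
          rw [mul_one]
          exact pow_le_pow_of_le_one (by positivity) (inv_le_one_of_one_le₀ hp1.le) (by omega)
  refine squeeze_zero_norm norm_le ?_
  exact (tendsto_pow_atTop_nhds_zero_of_lt_one (by positivity) (inv_lt_one_of_one_lt₀ hp1)).comp
    (Nat.tendsto_div_const_atTop two_ne_zero)

lemma eq_zero_of_infinite_sum_choose_mul_pow_smul_eq_zero {M : Type*} [AddCommGroup M]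
    [Module.Free ℤ M] {p : ℕ} [Fact p.Prime] (hp : 3 ≤ p) {c : ℕ → M}
    (hinf : {k : ℕ | ∑ i ∈ Finset.range (k + 1), (k.choose i * p ^ i : ℤ) • c i = 0}.Infinite)
    (i : ℕ) : c i = 0 := by
  let B := Module.Free.chooseBasis ℤ M
  refine B.ext_elem fun l ↦ ?_
  have p_ne_zero : (p : ℚ_[p]) ≠ 0 := by exact_mod_cast (Fact.out : p.Prime).ne_zero
  have factorial_ne_zero (i : ℕ) : (i.factorial : ℚ_[p]) ≠ 0 := by
    exact_mod_cast i.factorial_ne_zero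
  have coeff_eq_zero := eq_zero_of_infinite_newtonSeries_eq_zero
    (tendsto_padic_pow_mul_div_factorial hp fun i ↦ B.repr (c i) l) (hinf.mono fun k hk ↦ ?_) i
  · simpa [p_ne_zero, factorial_ne_zero] using coeff_eq_zero
  · have coord : ∑ i ∈ Finset.range (k + 1), (k.choose i * p ^ i : ℤ) * B.repr (c i) l = 0 := by
      simpa [Finsupp.finsetSum_apply] using congr(B.repr $hk l)
    rw [mem_ofPred_eq, ← Int.cast_zero, ← coord, Int.cast_sum]
    refine Finset.sum_congr rfl fun i _ ↦ ?_
    have := factorial_ne_zero i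
    rw [Nat.descFactorial_eq_factorial_mul_choose]
    push_cast
    field_simp

lemma exists_infinite_setOf_add_mul_mem {E : Set ℕ} (hE : E.Infinite) {e : ℕ} (he : 0 < e) :
    ∃ r, {k | r + e * k ∈ E}.Infinite := by
  by_contra! hfin
  have : E ⊆ ⋃ r ∈ Set.Iio e, (fun k ↦ r + e * k) '' {k | r + e * k ∈ E} := fun n hn ↦ by
    refine mem_biUnion (Nat.mod_lt n he) ⟨n / e, ?_, Nat.mod_add_div n e⟩
    rwa [mem_ofPred_eq, Nat.mod_add_div]
  exact hE (((finite_Iio e).biUnion fun r _ ↦ (hfin r).image _).subset this)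

lemma exists_prime_forall_pow_eq_one_add_mul {ι O : Type*} [Finite ι] [CommRing O] [IsDomain O]
    [CharZero O] [Module.Finite ℤ O] {b : ι → O} (hb : ∀ j, b j ≠ 0) :
    ∃ p e : ℕ, p.Prime ∧ 3 ≤ p ∧ 0 < e ∧ ∀ j, ∃ β : O, b j ^ e = 1 + p * β := by
  cases nonempty_fintype ι
  obtain ⟨m, hm0, hm⟩ : ∃ m : ℤ, m ≠ 0 ∧ ∏ j, b j ∣ (m : O) := by
    have := (Algebra.IsIntegral.isIntegral (R := ℤ) (∏ j, b j)).isAlgebraic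
    simpa using this.exists_nonzero_dvd
      (mem_nonZeroDivisors_of_ne_zero (Finset.prod_ne_zero_iff.mpr fun j _ ↦ hb j))
  obtain ⟨p, hpge, hp⟩ := Nat.exists_infinite_primes (m.natAbs + 3)
  have p_not_dvd : ¬ (p : ℤ) ∣ m := fun h ↦ by
    have := Nat.le_of_dvd (Int.natAbs_pos.mpr hm0) (Int.natCast_dvd.mp h)
    omega
  obtain ⟨u, v, huv⟩ := (Nat.prime_iff_prime_int.mp hp).coprime_iff_not_dvd.mpr p_not_dvd
  let I : Ideal O := Ideal.span {(p : O)}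
  have mk_p : Ideal.Quotient.mk I (p : O) = 0 :=
    Ideal.Quotient.eq_zero_iff_mem.mpr (Ideal.mem_span_singleton_self _)
  have : Finite (O ⧸ I) := Ideal.finiteQuotientOfFreeOfNeBot I <| by
    rw [Ne, Ideal.span_singleton_eq_bot]; exact_mod_cast hp.ne_zero
  have isUnit_mk (j : ι) : IsUnit (Ideal.Quotient.mk I (b j)) := by
    obtain ⟨d, hd⟩ := (Finset.dvd_prod_of_mem b (Finset.mem_univ j)).trans hm
    have bezout : (u * p + v * m : O) = 1 := by exact_mod_cast congr(($huv : O))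
    have := congr(Ideal.Quotient.mk I $bezout)
    rw [map_add, map_mul, mk_p, mul_zero, zero_add, hd, mul_left_comm, map_mul, map_one] at this
    exact .of_mul_eq_one _ this
  refine ⟨p, Nat.card (O ⧸ I)ˣ, hp, by omega, Nat.card_pos, fun j ↦ ?_⟩
  obtain ⟨u, hu⟩ := isUnit_mk j
  have mk_pow : Ideal.Quotient.mk I (b j ^ Nat.card (O ⧸ I)ˣ - 1) = 0 := by
    rw [map_sub, map_pow, ← hu, ← Units.val_pow_eq_pow_val, pow_card_eq_one', Units.val_one,
      map_one, sub_self]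
  obtain ⟨β, hβ⟩ := Ideal.mem_span_singleton.mp (Ideal.Quotient.eq_zero_iff_mem.mp mk_pow)
  exact ⟨β, by rw [← hβ, add_sub_cancel]⟩

open scoped Classical in
lemma sum_fiber_eq_zero_of_forall_sum_mul_monoidHom_eq_zero {ι G R : Type*} [Fintype ι] [Monoid G]
    [CommRing R] [IsDomain R] {μ : ι → R} {χ : ι → G →* R} (h : ∀ g, ∑ j, μ j * χ j g = 0)
    (χ₀ : G →* R) : ∑ j with χ j = χ₀, μ j = 0 := by
  have relation : ∑ ψ ∈ Finset.univ.image χ, (∑ j with χ j = ψ, μ j) • (ψ : G → R) = 0 := by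
    ext g
    rw [Pi.zero_apply, ← h g, ← Finset.sum_fiberwise_of_maps_to
      fun j _ ↦ Finset.mem_image_of_mem χ (Finset.mem_univ j), Finset.sum_apply]
    refine Finset.sum_congr rfl fun ψ _ ↦ ?_
    rw [Pi.smul_apply, smul_eq_mul, Finset.sum_mul]
    exact Finset.sum_congr rfl fun j hj ↦ by rw [(Finset.mem_filter.mp hj).2]
  by_cases hχ₀ : χ₀ ∈ Finset.univ.image χ
  · exact linearIndependent_iff'.mp (linearIndependent_monoidHom G R) _ _ relation χ₀ hχ₀
  · refine Finset.sum_eq_zero fun j hj ↦ absurd ?_ hχ₀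
    exact Finset.mem_image.mpr ⟨j, Finset.mem_univ j, (Finset.mem_filter.mp hj).2⟩

open scoped Classical in
lemma sum_fiber_eq_zero_of_forall_sum_mul_pow_eq_zero {ι R : Type*} [Fintype ι] [CommRing R]
    [IsDomain R] {μ β : ι → R} (h : ∀ i : ℕ, ∑ j, μ j * β j ^ i = 0) (x : R) :
    ∑ j with β j = x, μ j = 0 := by
  simpa only [(powersHom R).injective.eq_iff] using
    sum_fiber_eq_zero_of_forall_sum_mul_monoidHom_eq_zero (χ := fun j ↦ powersHom R (β j))
      (fun n ↦ h n.toAdd) (powersHom R x)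

open scoped Classical in
lemma sum_filter_mul_eq_zero_of_sum_fiber_eq_zero {ι κ R : Type*} [Fintype ι] [CommRing R]
    {μ : ι → R} {β : ι → κ} (h : ∀ x, ∑ j with β j = x, μ j = 0) {P : ι → Prop}
    (hP : ∀ i j, β i = β j → P i → P j) (f : κ → R) : ∑ j with P j, μ j * f (β j) = 0 := by
  rw [← Finset.sum_fiberwise_of_maps_to
    fun j _ ↦ Finset.mem_image_of_mem β (Finset.mem_univ j)]
  refine Finset.sum_eq_zero fun x _ ↦ ?_
  rw [Finset.filter_filter]
  by_cases hx : ∃ i, β i = x ∧ P i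
  · obtain ⟨i, rfl, hi⟩ := hx
    have filter_eq : ∀ j, P j ∧ β j = β i ↔ β j = β i :=
      fun j ↦ and_iff_right_of_imp fun hj ↦ hP i j hj.symm hi
    simp_rw [filter_eq]
    calc ∑ j with β j = β i, μ j * f (β j) = ∑ j with β j = β i, μ j * f (β i) :=
          Finset.sum_congr rfl fun j hj ↦ by rw [(Finset.mem_filter.mp hj).2]
      _ = 0 := by rw [← Finset.sum_mul, h, zero_mul]
  · refine Finset.sum_eq_zero fun j hj ↦ absurd ?_ hx
    exact ⟨j, (Finset.mem_filter.mp hj).2.2, (Finset.mem_filter.mp hj).2.1⟩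

/-- Equality up to torsion: for units, `x / y` is a root of unity. -/
def EqModTorsion {M : Type*} [Monoid M] (x y : M) : Prop := ∃ e : ℕ, 0 < e ∧ x ^ e = y ^ e

lemma EqModTorsion.of_pow_eq_pow {M : Type*} [Monoid M] {x y z : M} {e : ℕ} (he : 0 < e)
    (h : x ^ e = y ^ e) (hxz : EqModTorsion x z) : EqModTorsion y z := by
  obtain ⟨f, hf, hxz⟩ := hxz
  exact ⟨e * f, Nat.mul_pos he hf, by rw [pow_mul, ← h, pow_right_comm, hxz, ← pow_mul, mul_comm]⟩

lemma eqModTorsion_inv_iff {G : Type*} [DivisionMonoid G] {x y : G} :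
    EqModTorsion x⁻¹ y⁻¹ ↔ EqModTorsion x y := by
  simp only [EqModTorsion, inv_pow, inv_inj]

-- Hansel's proof of the Skolem–Mahler–Lech theorem: along a progression `r + e k` the sum is a
-- `p`-adically convergent Newton series in `k`, whose coefficients determine the `β j`-fibre sums.
open scoped Classical in
lemma finite_setOf_sum_mul_pow_eq_zero_of_finite_int {ι O : Type*} [Fintype ι] [CommRing O]
    [IsDomain O] [CharZero O] [Module.Finite ℤ O] (lam : ι → O) {b : ι → O} (hb : ∀ j, b j ≠ 0)
    (j₀ : ι) :
    {n : ℕ | ∑ j, lam j * b j ^ n = 0 ∧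
      ∑ j with EqModTorsion (b j) (b j₀), lam j * b j ^ n ≠ 0}.Finite := by
  by_contra hE
  obtain ⟨p, e, hp, hp3, he, hβ⟩ := exists_prime_forall_pow_eq_one_add_mul hb
  choose β hβ using hβ
  obtain ⟨r, hr⟩ := exists_infinite_setOf_add_mul_mem hE he
  let μ (j : ι) : O := lam j * b j ^ r
  have term_eq (j : ι) (k : ℕ) : lam j * b j ^ (r + e * k) = μ j * (1 + p * β j) ^ k := by
    rw [pow_add, pow_mul, hβ, mul_assoc]
  have binomial (k : ℕ) : ∑ i ∈ Finset.range (k + 1), (k.choose i * p ^ i : ℤ) •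
      ∑ j, μ j * β j ^ i = ∑ j, lam j * b j ^ (r + e * k) := by
    simp_rw [Finset.smul_sum]
    rw [Finset.sum_comm]
    refine Finset.sum_congr rfl fun j _ ↦ ?_
    rw [term_eq, add_comm (1 : O), add_pow, Finset.mul_sum]
    exact Finset.sum_congr rfl fun i _ ↦ by push_cast [zsmul_eq_mul]; ring
  have := Fact.mk hp
  have moments : ∀ i, ∑ j, μ j * β j ^ i = 0 :=
    eq_zero_of_infinite_sum_choose_mul_pow_smul_eq_zero hp3 <|
      hr.mono fun k hk ↦ (binomial k).trans hk.1
  obtain ⟨k, -, hk⟩ := hr.nonempty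
  refine hk ?_
  simp_rw [term_eq]
  refine sum_filter_mul_eq_zero_of_sum_fiber_eq_zero
    (sum_fiber_eq_zero_of_forall_sum_mul_pow_eq_zero moments) (fun i j hij ↦ ?_)
    fun x ↦ (1 + p * x) ^ k
  exact .of_pow_eq_pow he (by rw [hβ, hβ, hij])

variable {ι A : Type*} [Fintype ι] [Field A] [CharZero A] [Algebra.IsAlgebraic ℚ A]

open scoped Classical in
lemma finite_setOf_nat_sum_mul_pow_eq_zero (lam : ι → A) {α : ι → A} (hα : ∀ j, α j ≠ 0)
    (j₀ : ι) :
    {n : ℕ | ∑ j, lam j * α j ^ n = 0 ∧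
      ∑ j with EqModTorsion (α j) (α j₀), lam j * α j ^ n ≠ 0}.Finite := by
  have : Algebra.IsAlgebraic ℤ A := (IsFractionRing.comap_isAlgebraic_iff (K := ℚ)).mpr ‹_›
  let s : Set A := range lam ∪ range α
  obtain ⟨D, hD, isIntegral⟩ := Algebra.IsAlgebraic.exists_integral_multiples ℤ
    (s.toFinite.toFinset)
  have hDA : (D : A) ≠ 0 := Int.cast_ne_zero.mpr hD
  let O := Algebra.adjoin ℤ ((D • ·) '' s)
  have : Module.Finite ℤ O := by
    refine Algebra.finite_adjoin_of_finite_of_isIntegral (s.toFinite.image _) ?_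
    rintro _ ⟨x, hx, rfl⟩
    exact isIntegral x (by simpa using hx)
  let l (j : ι) : O := ⟨D • lam j, Algebra.subset_adjoin ⟨_, .inl ⟨j, rfl⟩, rfl⟩⟩
  let b (j : ι) : O := ⟨D • α j, Algebra.subset_adjoin ⟨_, .inr ⟨j, rfl⟩, rfl⟩⟩
  have coe_l (j : ι) : (l j : A) = D * lam j := zsmul_eq_mul _ _
  have coe_b (j : ι) : (b j : A) = D * α j := zsmul_eq_mul _ _
  have coe_sum (J : Finset ι) (n : ℕ) :
      ((∑ j ∈ J, l j * b j ^ n : O) : A) = D ^ (n + 1) * ∑ j ∈ J, lam j * α j ^ n := by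
    push_cast [Finset.mul_sum, coe_l, coe_b]
    exact Finset.sum_congr rfl fun j _ ↦ by ring
  have sum_eq_zero_iff (J : Finset ι) (n : ℕ) :
      ∑ j ∈ J, l j * b j ^ n = 0 ↔ ∑ j ∈ J, lam j * α j ^ n = 0 := by
    rw [← ZeroMemClass.coe_eq_zero, coe_sum, mul_eq_zero, or_iff_right (pow_ne_zero _ hDA)]
  have eqModTorsion_iff (i j : ι) : EqModTorsion (b i) (b j) ↔ EqModTorsion (α i) (α j) := by
    refine exists_congr fun e ↦ and_congr_right fun _ ↦ ?_
    rw [Subtype.ext_iff, SubmonoidClass.coe_pow, SubmonoidClass.coe_pow, coe_b, coe_b, mul_pow,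
      mul_pow, mul_right_inj' (pow_ne_zero _ hDA)]
  have hb (j : ι) : b j ≠ 0 := by
    rw [← ZeroMemClass.coe_eq_zero.ne, coe_b]; exact mul_ne_zero hDA (hα j)
  simpa only [sum_eq_zero_iff, eqModTorsion_iff, ne_eq] using
    finite_setOf_sum_mul_pow_eq_zero_of_finite_int l hb j₀

open scoped Classical in
lemma finite_setOf_int_sum_mul_zpow_eq_zero (lam : ι → A) {α : ι → A} (hα : ∀ j, α j ≠ 0)
    (j₀ : ι) :
    {n : ℤ | ∑ j, lam j * α j ^ n = 0 ∧
      ∑ j with EqModTorsion (α j) (α j₀), lam j * α j ^ n ≠ 0}.Finite := by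
  have nonneg := finite_setOf_nat_sum_mul_pow_eq_zero lam hα j₀
  have nonpos := finite_setOf_nat_sum_mul_pow_eq_zero lam (fun j ↦ inv_ne_zero (hα j)) j₀
  refine ((nonneg.image Nat.cast).union (nonpos.image fun n : ℕ ↦ -(n : ℤ))).subset ?_
  intro n hn
  obtain ⟨m, rfl | rfl⟩ := n.eq_nat_or_neg
  · exact .inl ⟨m, by simpa using hn, rfl⟩
  · exact .inr ⟨m, by simpa [eqModTorsion_inv_iff] using hn, rfl⟩

end SkolemMahlerLech

section Kummer

lemma isOfFinOrder_of_pow_eq_pow {K : Type*} [GroupWithZero K] {x : K} (hx : x ≠ 0) {m n : ℕ}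
    (hmn : m ≠ n) (h : x ^ m = x ^ n) : IsOfFinOrder x := by
  by_contra hfin
  rw [← Units.val_mk0 hx, Units.isOfFinOrder_val, ← injective_pow_iff_not_isOfFinOrder] at hfin
  exact hmn (hfin (Units.ext (by simpa using h)))

lemma eqModTorsion_iff_isOfFinOrder_div {K : Type*} [Field K] {x y : K} (hy : y ≠ 0) :
    EqModTorsion x y ↔ IsOfFinOrder (x / y) := by
  rw [isOfFinOrder_iff_pow_eq_one]
  refine exists_congr fun e ↦ and_congr_right fun _ ↦ ?_
  rw [div_pow, div_eq_one_iff_eq (pow_ne_zero e hy)]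

-- Roots of `θ` have bounded denominators and bounded conjugates, so Northcott applies.
lemma finite_setOf_exists_pow_eq_of_numberField {K : Type*} [Field K] [NumberField K] {θ : K}
    (h0 : θ ≠ 0) (hθ : ¬ IsOfFinOrder θ) : {b : ℕ | 0 < b ∧ ∃ δ : K, δ ^ b = θ}.Finite := by
  by_contra! hinf
  have : IsAlgebraic ℤ θ :=
    (IsFractionRing.isAlgebraic_iff ℤ ℚ K).mpr (Algebra.IsAlgebraic.isAlgebraic θ)
  obtain ⟨m, hm0, hm⟩ := this.exists_integral_multiple
  let B : ℝ := 1 + ∑ φ : K →+* ℂ, ‖φ θ‖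
  have one_le_B : 1 ≤ B := le_add_of_nonneg_right (Finset.sum_nonneg fun _ _ ↦ norm_nonneg _)
  have norm_le_B (φ : K →+* ℂ) : ‖φ θ‖ ≤ B :=
    (Finset.single_le_sum (f := fun φ : K →+* ℂ ↦ ‖φ θ‖) (fun _ _ ↦ norm_nonneg _)
      (Finset.mem_univ φ)).trans (le_add_of_nonneg_left zero_le_one)
  choose! δ hδ using fun b (hb : b ∈ {b : ℕ | 0 < b ∧ ∃ δ : K, δ ^ b = θ}) ↦ hb.2
  have mapsTo : MapsTo (fun b ↦ m • δ b) {b : ℕ | 0 < b ∧ ∃ δ : K, δ ^ b = θ}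
      {x : K | IsIntegral ℤ x ∧ ∀ φ : K →+* ℂ, ‖φ x‖ ≤ ‖(m : ℂ)‖ * B} := by
    refine fun b hb ↦ ⟨.of_pow hb.1 ?_, fun φ ↦ ?_⟩
    · rw [smul_pow, hδ b hb, ← Nat.sub_add_cancel hb.1, pow_succ, mul_smul]
      exact hm.smul _
    · simp only [zsmul_eq_mul, map_mul, map_intCast, norm_mul]
      gcongr
      by_contra! hlt
      have : ‖φ (δ b)‖ ≤ ‖φ (δ b)‖ ^ b := le_self_pow₀ (one_le_B.trans hlt.le) hb.1.ne'
      rw [← norm_pow, ← map_pow, hδ b hb] at this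
      exact (hlt.trans_le this).not_ge (norm_le_B φ)
  obtain ⟨b, hb, b', hb', hne, heq⟩ := Set.Infinite.exists_ne_map_eq_of_mapsTo hinf mapsTo
    (NumberField.Embeddings.finite_of_norm_le K ℂ (‖(m : ℂ)‖ * B))
  have δ_eq : δ b = δ b' := smul_right_injective K hm0 heq
  have δ_ne_zero : δ b ≠ 0 := fun h ↦ h0 <| by rw [← hδ b hb, h, zero_pow hb.1.ne']
  refine hθ ?_
  rw [← hδ b hb]
  exact (isOfFinOrder_of_pow_eq_pow δ_ne_zero hne <| by rw [hδ b hb, δ_eq, hδ b' hb']).pow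

lemma map_comm_of_isOfFinOrder {R : Type*} [CommRing R] [IsDomain R] (σ τ : R →* R) {z : R}
    (hz : IsOfFinOrder z) : σ (τ z) = τ (σ z) := by
  obtain ⟨n, hn, hz⟩ := isOfFinOrder_iff_pow_eq_one.mp hz
  have : NeZero n := ⟨hn.ne'⟩
  obtain ⟨s, hs⟩ := map_rootsOfUnity_eq_pow_self σ (rootsOfUnity.mkOfPowEq z hz)
  obtain ⟨t, ht⟩ := map_rootsOfUnity_eq_pow_self τ (rootsOfUnity.mkOfPowEq z hz)
  simp only [rootsOfUnity.val_mkOfPowEq_coe] at hs ht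
  rw [ht, hs, map_pow, map_pow, hs, ht, pow_right_comm]

section Conjugates

variable {F K : Type*} [Field F] [Field K] [Algebra F K] [Algebra.IsAlgebraic F K]

lemma finite_range_algEquiv_apply (x : K) : (range fun τ : K ≃ₐ[F] K ↦ τ x).Finite := by
  refine ((minpoly F x).rootSet_finite K).subset ?_
  rintro _ ⟨τ, rfl⟩
  rw [Polynomial.mem_rootSet]
  refine ⟨minpoly.ne_zero (Algebra.IsIntegral.isIntegral x), ?_⟩
  simpa using Polynomial.aeval_algHom_apply τ x (minpoly F x)

lemma isOfFinOrder_of_isOfFinOrder_pow_div_apply {x : ℕ} (hx : 2 ≤ x) (τ : K ≃ₐ[F] K) {α : K}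
    (h0 : α ≠ 0) (h : IsOfFinOrder (α ^ x / τ α)) : IsOfFinOrder α := by
  obtain ⟨n, hn, h⟩ := isOfFinOrder_iff_pow_eq_one.mp h
  rw [div_pow, div_eq_one_iff_eq (pow_ne_zero n (by simpa using h0)), ← pow_mul, ← map_pow] at h
  have iterate (k : ℕ) : α ^ (x ^ k * n) = (τ ^ k) (α ^ n) := by
    induction k with
    | zero => simp
    | succ k ih =>
      rw [pow_succ' τ, AlgEquiv.mul_apply, ← ih, show x ^ (k + 1) * n = x * n * x ^ k by ring,
        pow_mul, h, ← map_pow, ← pow_mul, mul_comm n]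
  obtain ⟨k, -, k', -, hne, heq⟩ := infinite_univ.exists_ne_map_eq_of_mapsTo
    (fun k _ ↦ mem_range_self (τ ^ k)) (finite_range_algEquiv_apply (F := F) α)
  refine isOfFinOrder_of_pow_eq_pow h0 (m := x ^ k * n) (n := x ^ k' * n) (fun h ↦ hne ?_) ?_
  · exact Nat.pow_right_injective hx (Nat.eq_of_mul_eq_mul_right hn h)
  · rw [iterate, iterate, map_pow, map_pow, heq]

end Conjugates

variable {A : Type*} [Field A] [CharZero A]

/-- The group of automorphisms of `A` over `M(μ_∞)`, the field generated by `M` and all roots of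
unity. -/
def galOverCyclotomic (M : Set A) : Subgroup (A ≃ₐ[ℚ] A) :=
  fixingSubgroup (A ≃ₐ[ℚ] A) (M ∪ {z | IsOfFinOrder z})

lemma mem_galOverCyclotomic {M : Set A} {σ : A ≃ₐ[ℚ] A} :
    σ ∈ galOverCyclotomic M ↔ (∀ x ∈ M, σ x = x) ∧ ∀ z, IsOfFinOrder z → σ z = z := by
  simp [galOverCyclotomic, mem_fixingSubgroup_iff, or_imp, forall_and]

lemma algEquiv_apply_mem_of_normal {M : IntermediateField ℚ A} [Normal ℚ M] (τ : A ≃ₐ[ℚ] A) {y : A}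
    (hy : y ∈ M) : τ y ∈ M :=
  (AlgEquiv.restrictNormal_commutes τ M ⟨y, hy⟩) ▸ Subtype.mem _

variable [IsAlgClosed A] [Algebra.IsAlgebraic ℚ A]

instance isGalois_rat_of_isAlgClosed : IsGalois ℚ A :=
  have : IsAlgClosure ℚ A := ⟨inferInstance, inferInstance⟩
  IsAlgClosure.isGalois ℚ A

lemma exists_algEquiv_apply_primitiveRoot_eq_pow {ζ : A} {b x : ℕ} (hb : 0 < b)
    (hζ : IsPrimitiveRoot ζ b) (hxb : x.Coprime b) : ∃ τ : A ≃ₐ[ℚ] A, τ ζ = ζ ^ x := by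
  refine isConjRoot_iff_exists_algEquiv.mp ?_
  rw [IsConjRoot, ← Polynomial.cyclotomic_eq_minpoly_rat hζ hb,
    ← Polynomial.cyclotomic_eq_minpoly_rat (hζ.pow_of_coprime x hxb) hb]

variable {M : IntermediateField ℚ A} [Normal ℚ M]

-- `Gal(A/M)` acts on `β` through a cyclotomic character, which commutes with `τ` modulo
-- automorphisms over `M(μ_∞)`.
lemma pow_div_apply_mem_of_fixed {β ζ : A} {b x : ℕ} (hβ0 : β ≠ 0) (hβ : β ^ b ∈ M)
    (hfix : ∀ σ ∈ galOverCyclotomic (M : Set A), σ β = β) (hb : b ≠ 0)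
    (hζ : IsPrimitiveRoot ζ b) {τ : A ≃ₐ[ℚ] A} (hτ : τ ζ = ζ ^ x) : β ^ x / τ β ∈ M := by
  rw [← InfiniteGalois.fixedField_fixingSubgroup M, IntermediateField.mem_fixedField_iff]
  intro σ hσ
  rw [IntermediateField.mem_fixingSubgroup_iff] at hσ
  have comm : σ (τ β) = τ (σ β) := by
    have commutator_apply_eq_iff (z : A) :
        ((τ * σ)⁻¹ * (σ * τ)) z = z ↔ σ (τ z) = τ (σ z) := (τ * σ).symm_apply_eq
    rw [← commutator_apply_eq_iff]
    refine hfix _ (mem_galOverCyclotomic.mpr ⟨fun y hy ↦ ?_, fun z hz ↦ ?_⟩)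
    · rw [commutator_apply_eq_iff, hσ _ (algEquiv_apply_mem_of_normal τ hy), hσ y hy]
    · rw [commutator_apply_eq_iff]
      exact map_comm_of_isOfFinOrder (σ : A →* A) (τ : A →* A) hz
  have : NeZero b := ⟨hb⟩
  obtain ⟨i, -, hi⟩ := hζ.eq_pow_of_pow_eq_one (ξ := σ β / β) <| by
    rw [div_pow, ← map_pow, hσ _ hβ, div_self (pow_ne_zero b hβ0)]
  have hσβ : σ β = ζ ^ i * β := by rw [hi, div_mul_cancel₀ _ hβ0]
  rw [map_div₀, comm, map_pow, hσβ, map_mul, map_pow, hτ, mul_pow, pow_right_comm,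
    mul_div_mul_left _ _ (pow_ne_zero _ (pow_ne_zero _ (hζ.ne_zero hb)))]

variable [FiniteDimensional ℚ M]

lemma finite_setOf_coprime_exists_pow_eq_fixed {α : A} (hαM : α ∈ M) (h0 : α ≠ 0)
    (hα : ¬ IsOfFinOrder α) {x : ℕ} (hx : 2 ≤ x) :
    {b : ℕ | 0 < b ∧ x.Coprime b ∧ ∃ β : A, β ^ b = α ∧
      ∀ σ ∈ galOverCyclotomic (M : Set A), σ β = β}.Finite := by
  have : NumberField M := @NumberField.mk _ _ inferInstance (by convert ‹FiniteDimensional ℚ M›)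
  have finite_of_conjugate (τ : A ≃ₐ[ℚ] A) :
      {b : ℕ | 0 < b ∧ ∃ δ : M, (δ : A) ^ b = α ^ x / τ α}.Finite := by
    let θ : M := ⟨α ^ x / τ α, M.div_mem (pow_mem hαM x) (algEquiv_apply_mem_of_normal τ hαM)⟩
    have coe_θ : (θ : A) = α ^ x / τ α := rfl
    have θ_ne_zero : θ ≠ 0 := by
      rw [← ZeroMemClass.coe_eq_zero.ne, coe_θ]
      exact div_ne_zero (pow_ne_zero x h0) (by simpa using h0)
    have hθ : ¬ IsOfFinOrder θ := fun h ↦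
      hα (isOfFinOrder_of_isOfFinOrder_pow_div_apply hx τ h0 (M.val.toMonoidHom.isOfFinOrder h))
    simpa only [Subtype.ext_iff, SubmonoidClass.coe_pow, coe_θ] using
      finite_setOf_exists_pow_eq_of_numberField θ_ne_zero hθ
  refine ((finite_range_algEquiv_apply (F := ℚ) α).biUnion
    (t := fun α' ↦ {b : ℕ | 0 < b ∧ ∃ δ : M, (δ : A) ^ b = α ^ x / α'}) ?_).subset ?_
  · rintro _ ⟨τ, rfl⟩
    exact finite_of_conjugate τ
  rintro b ⟨hb, hxb, β, rfl, hfix⟩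
  have : NeZero b := ⟨hb.ne'⟩
  obtain ⟨ζ, hζ⟩ := HasEnoughRootsOfUnity.exists_primitiveRoot A b
  obtain ⟨τ, hτ⟩ := exists_algEquiv_apply_primitiveRoot_eq_pow hb hζ hxb
  have hβ0 : β ≠ 0 := fun h ↦ h0 (by rw [h, zero_pow hb.ne'])
  refine mem_biUnion ⟨τ, rfl⟩
    ⟨hb, ⟨_, pow_div_apply_mem_of_fixed hβ0 hαM hfix hb.ne' hζ hτ⟩, ?_⟩
  simp only [div_pow, map_pow, pow_right_comm β x b]

lemma finite_setOf_exists_pow_eq_fixed {α : A} (hαM : α ∈ M) (h0 : α ≠ 0)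
    (hα : ¬ IsOfFinOrder α) :
    {b : ℕ | 0 < b ∧ ∃ β : A, β ^ b = α ∧ ∀ σ ∈ galOverCyclotomic (M : Set A), σ β = β}.Finite := by
  have odd_part := finite_setOf_coprime_exists_pow_eq_fixed hαM h0 hα (x := 2) le_rfl
  have two_part := finite_setOf_coprime_exists_pow_eq_fixed hαM h0 hα (x := 3) (by norm_num)
  refine ((odd_part.prod two_part).image fun p ↦ p.1 * p.2).subset ?_
  rintro b ⟨hb, β, rfl, hfix⟩
  obtain ⟨k, m, hm, rfl⟩ := Nat.exists_eq_two_pow_mul_odd hb.ne'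
  refine ⟨(m, 2 ^ k), ⟨⟨hm.pos, Nat.coprime_two_left.mpr hm, β ^ 2 ^ k, (pow_mul ..).symm, ?_⟩,
    ⟨by positivity, .pow_right _ (by norm_num), β ^ m, (pow_mul' ..).symm, ?_⟩⟩, mul_comm ..⟩
  all_goals intro σ hσ; rw [map_pow, hfix σ hσ]

end Kummer

section RationalExponents

-- The eigenvectors `γ j` are grouped by their characters `g ↦ g • γ j / γ j`.
open scoped Classical in
lemma sum_filter_div_fixed_eq_zero {ι G K : Type*} [Fintype ι] [Group G] [Field K]
    [MulSemiringAction G K] {lam γ : ι → K} (hγ : ∀ j, γ j ≠ 0)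
    (hlam : ∀ (g : G) j, g • lam j = lam j)
    (hfix : ∀ (g h : G) j, h • (g • γ j / γ j) = g • γ j / γ j)
    (hsum : ∑ j, lam j * γ j = 0) (j₀ : ι) :
    ∑ j with ∀ g : G, g • (γ j / γ j₀) = γ j / γ j₀, lam j * γ j = 0 := by
  let χ (j : ι) : G →* K :=
    { toFun g := g • γ j / γ j
      map_one' := by rw [one_smul, div_self (hγ j)]
      map_mul' g h := by
        rw [← hfix h g j, smul_div₀', smul_smul, mul_comm,
          div_mul_div_cancel₀ ((smul_ne_zero_iff_ne g).mpr (hγ j))] }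
  have relation (g : G) : ∑ j, lam j * γ j * χ j g = 0 := by
    rw [← smul_zero g, ← hsum, Finset.smul_sum]
    refine Finset.sum_congr rfl fun j _ ↦ ?_
    rw [smul_mul', hlam, mul_assoc]
    exact congrArg (lam j * ·) (mul_div_cancel₀ _ (hγ j))
  have χ_eq_iff (j : ι) : χ j = χ j₀ ↔ ∀ g : G, g • (γ j / γ j₀) = γ j / γ j₀ := by
    refine DFunLike.ext_iff.trans (forall_congr' fun g ↦ ?_)
    have := (smul_ne_zero_iff_ne g).mpr (hγ j₀)
    rw [smul_div₀', div_eq_div_iff this (hγ j₀), mul_comm (γ j)]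
    exact div_eq_div_iff (hγ j) (hγ j₀)
  simpa only [χ_eq_iff] using
    sum_fiber_eq_zero_of_forall_sum_mul_monoidHom_eq_zero relation (χ j₀)

lemma isOfFinOrder_addChar_apply {K : Type*} [Field K] {ψ : AddChar ℚ K} {q : ℚ} (hq : q ≠ 0)
    (h : IsOfFinOrder (ψ q)) (r : ℚ) : IsOfFinOrder (ψ r) := by
  obtain ⟨n, hn, h⟩ := isOfFinOrder_iff_pow_eq_one.mp h
  refine isOfFinOrder_iff_pow_eq_one.mpr ⟨(r / q).den * n, by positivity, ?_⟩
  have den_smul : ((r / q).den * n) • r = (r / q).num • n • q := by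
    have := Rat.den_mul_eq_num (r / q)
    simp only [nsmul_eq_mul, zsmul_eq_mul, Nat.cast_mul, ← this]
    field_simp
  rw [← AddChar.map_nsmul_eq_pow, den_smul, AddChar.map_zsmul_eq_zpow, AddChar.map_nsmul_eq_pow, h,
    one_zpow]

lemma eqModTorsion_addChar_apply {K : Type*} [Field K] {ψ φ : AddChar ℚ K} {q : ℚ} (hq : q ≠ 0)
    (h : EqModTorsion (ψ q) (φ q)) (r : ℚ) : EqModTorsion (ψ r) (φ r) := by
  rw [eqModTorsion_iff_isOfFinOrder_div (φ.val_isUnit _).ne_zero, ← AddChar.div_apply'] at h ⊢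
  exact isOfFinOrder_addChar_apply hq h r

lemma exists_zsmul_add_zsmul_one_eq_inv_den (q : ℚ) :
    ∃ u v : ℤ, u • q + v • (1 : ℚ) = (q.den : ℚ)⁻¹ := by
  obtain ⟨u, v, huv⟩ : IsCoprime q.num (q.den : ℤ) := Int.isCoprime_iff_gcd_eq_one.mpr q.reduced
  refine ⟨u, v, ?_⟩
  have := Rat.mul_den_eq_num q
  refine eq_inv_of_mul_eq_one_left ?_
  rw [zsmul_eq_mul, zsmul_eq_mul, mul_one, add_mul, mul_assoc, this]
  exact_mod_cast huv

open scoped Classical in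
lemma finite_setOf_den_eq_sum_mul_addChar_eq_zero {ι A : Type*} [Fintype ι] [Field A] [CharZero A]
    [Algebra.IsAlgebraic ℚ A] (lam : ι → A) (γ : ι → AddChar ℚ A) (j₀ : ι) (b : ℕ) :
    {q : ℚ | q.den = b ∧ ∑ j, lam j * γ j q = 0 ∧
      ∑ j with EqModTorsion (γ j 1) (γ j₀ 1), lam j * γ j q ≠ 0}.Finite := by
  refine ((finite_setOf_int_sum_mul_zpow_eq_zero lam (α := fun j ↦ γ j (b : ℚ)⁻¹)
    (fun j ↦ ((γ j).val_isUnit _).ne_zero) j₀).image fun n : ℤ ↦ (n / b : ℚ)).subset ?_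
  rintro q ⟨rfl, hsum, hne⟩
  have zpow_num (j : ι) : γ j (q.den : ℚ)⁻¹ ^ q.num = γ j q := by
    rw [← AddChar.map_zsmul_eq_zpow, zsmul_eq_mul, ← div_eq_mul_inv, Rat.num_div_den]
  have hden : (q.den : ℚ)⁻¹ ≠ 0 := by simp
  have eqModTorsion_iff (j : ι) :
      EqModTorsion (γ j (q.den : ℚ)⁻¹) (γ j₀ (q.den : ℚ)⁻¹) ↔ EqModTorsion (γ j 1) (γ j₀ 1) :=
    ⟨(eqModTorsion_addChar_apply hden · 1), (eqModTorsion_addChar_apply one_ne_zero · _)⟩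
  refine ⟨q.num, ⟨?_, ?_⟩, q.num_div_den⟩
  · simpa only [zpow_num] using hsum
  · simpa only [zpow_num, eqModTorsion_iff] using hne

variable {ι A : Type*} [Fintype ι] [Field A] [CharZero A]

open scoped Classical in
lemma sum_filter_addChar_div_fixed_eq_zero {M : Set A} {lam : ι → A} {γ : ι → AddChar ℚ A}
    (hlam : ∀ j, lam j ∈ M) (hγ : ∀ j, γ j 1 ∈ M) {q : ℚ} (hq : ∑ j, lam j * γ j q = 0) (j₀ : ι) :
    ∑ j with ∀ σ ∈ galOverCyclotomic M, σ (γ j q / γ j₀ q) = γ j q / γ j₀ q,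
      lam j * γ j q = 0 := by
  have ne_zero (j : ι) : γ j q ≠ 0 := ((γ j).val_isUnit q).ne_zero
  have isOfFinOrder {σ : A ≃ₐ[ℚ] A} (hσ : σ ∈ galOverCyclotomic M) (j : ι) :
      IsOfFinOrder (σ (γ j q) / γ j q) := by
    have pow_den : γ j q ^ q.den = γ j 1 ^ q.num := by
      rw [← AddChar.map_nsmul_eq_pow, ← AddChar.map_zsmul_eq_zpow, nsmul_eq_mul, zsmul_eq_mul,
        Rat.den_mul_eq_num, mul_one]
    refine isOfFinOrder_iff_pow_eq_one.mpr ⟨q.den, q.den_pos, ?_⟩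
    rw [div_pow, ← map_pow, pow_den, map_zpow₀, (mem_galOverCyclotomic.mp hσ).1 _ (hγ j), ← pow_den,
      div_self (pow_ne_zero _ (ne_zero j))]
  have := sum_filter_div_fixed_eq_zero (G := galOverCyclotomic M) ne_zero
    (fun σ j ↦ (mem_galOverCyclotomic.mp σ.2).1 _ (hlam j))
    (fun σ τ j ↦ (mem_galOverCyclotomic.mp τ.2).2 _ (isOfFinOrder σ.2 j)) hq j₀
  simpa only [Subtype.forall, Subgroup.mk_smul, AlgEquiv.smul_def] using this

variable [IsAlgClosed A] [Algebra.IsAlgebraic ℚ A]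

lemma finite_setOf_den_addChar_fixed {M : IntermediateField ℚ A} [FiniteDimensional ℚ M]
    [Normal ℚ M] {ψ : AddChar ℚ A} (hψM : ψ 1 ∈ M) (hψ : ¬ IsOfFinOrder (ψ 1)) :
    {b : ℕ | ∃ q : ℚ, q.den = b ∧
      ∀ σ ∈ galOverCyclotomic (M : Set A), σ (ψ q) = ψ q}.Finite := by
  refine (finite_setOf_exists_pow_eq_fixed hψM (ψ.val_isUnit 1).ne_zero hψ).subset ?_
  rintro _ ⟨q, rfl, hfix⟩
  refine ⟨q.den_pos, ψ (q.den : ℚ)⁻¹, ?_, fun σ hσ ↦ ?_⟩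
  · rw [← AddChar.map_nsmul_eq_pow, nsmul_eq_mul, mul_inv_cancel₀ (by simp)]
  · obtain ⟨u, v, huv⟩ := exists_zsmul_add_zsmul_one_eq_inv_den q
    rw [← huv, AddChar.map_add_eq_mul, AddChar.map_zsmul_eq_zpow, AddChar.map_zsmul_eq_zpow,
      map_mul, map_zpow₀, map_zpow₀, hfix σ hσ, (mem_galOverCyclotomic.mp hσ).1 _ hψM]

lemma exists_normal_finiteDimensional_of_finite {s : Set A} (hs : s.Finite) :
    ∃ M : IntermediateField ℚ A, Normal ℚ M ∧ FiniteDimensional ℚ M ∧ s ⊆ M := by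
  have := hs.to_subtype
  have : FiniteDimensional ℚ (IntermediateField.adjoin ℚ s) :=
    IntermediateField.finiteDimensional_adjoin fun x _ ↦ Algebra.IsIntegral.isIntegral x
  refine ⟨IntermediateField.normalClosure ℚ (IntermediateField.adjoin ℚ s) A,
    normalClosure.normal .., inferInstance, ?_⟩
  exact (IntermediateField.subset_adjoin ℚ s).trans (IntermediateField.le_normalClosure _)

open scoped Classical in
lemma finite_setOf_sum_mul_addChar_eq_zero (lam : ι → A) (γ : ι → AddChar ℚ A) (j₀ : ι) :
    {q : ℚ | ∑ j, lam j * γ j q = 0 ∧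
      ∑ j with EqModTorsion (γ j 1) (γ j₀ 1), lam j * γ j q ≠ 0}.Finite := by
  obtain ⟨M, _, _, hM⟩ := exists_normal_finiteDimensional_of_finite
    ((finite_range lam).union (finite_range fun j ↦ γ j 1))
  have hlam (j : ι) : lam j ∈ M := hM (.inl ⟨j, rfl⟩)
  have hγ (j : ι) : γ j 1 ∈ M := hM (.inr ⟨j, rfl⟩)
  have div_isOfFinOrder_iff (j : ι) :
      IsOfFinOrder ((γ j / γ j₀) 1) ↔ EqModTorsion (γ j 1) (γ j₀ 1) := by
    rw [AddChar.div_apply', eqModTorsion_iff_isOfFinOrder_div ((γ j₀).val_isUnit 1).ne_zero]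
  have finite_den (j : {j // ¬ EqModTorsion (γ j 1) (γ j₀ 1)}) := finite_setOf_den_addChar_fixed
    (ψ := γ j / γ j₀) (AddChar.div_apply' (γ j) _ _ ▸ M.div_mem (hγ j) (hγ j₀))
    ((div_isOfFinOrder_iff j).not.mpr j.2)
  refine (Finite.biUnion (finite_iUnion finite_den)
    fun b _ ↦ finite_setOf_den_eq_sum_mul_addChar_eq_zero lam γ j₀ b).subset ?_
  rintro q ⟨hsum, hne⟩
  refine mem_biUnion (x := q.den) ?_ ⟨rfl, hsum, hne⟩
  contrapose! hne
  rw [← sum_filter_addChar_div_fixed_eq_zero hlam hγ hsum j₀]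
  refine Finset.sum_congr (Finset.filter_congr fun j _ ↦ ⟨fun hj σ hσ ↦ ?_, fun hfix ↦ ?_⟩)
    fun _ _ ↦ rfl
  · rw [← AddChar.div_apply']
    exact (mem_galOverCyclotomic.mp hσ).2 _
      (isOfFinOrder_addChar_apply one_ne_zero ((div_isOfFinOrder_iff j).mpr hj) q)
  · by_contra hj
    refine hne (mem_iUnion.mpr ⟨⟨j, hj⟩, q, rfl, ?_⟩)
    simpa only [AddChar.div_apply'] using hfix

open scoped Classical in
lemma finite_setOf_sum_addChar_smul_eq_zero {V : Type*} [AddCommGroup V] [Module A V]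
    (lam : ι → V) (γ : ι → AddChar ℚ A) (j₀ : ι) :
    {q : ℚ | ∑ j, γ j q • lam j = 0 ∧
      ∑ j with EqModTorsion (γ j 1) (γ j₀ 1), γ j q • lam j ≠ 0}.Finite := by
  let B := Module.Basis.ofVectorSpace A V
  refine (finite_iUnion fun t : Finset.univ.biUnion fun j ↦ (B.repr (lam j)).support ↦
    finite_setOf_sum_mul_addChar_eq_zero (fun j ↦ B.repr (lam j) t) γ j₀).subset ?_
  rintro q ⟨hsum, hne⟩
  have repr_sum (J : Finset ι) (t) :
      B.repr (∑ j ∈ J, γ j q • lam j) t = ∑ j ∈ J, B.repr (lam j) t * γ j q := by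
    simp [Finsupp.finsetSum_apply, mul_comm]
  obtain ⟨t, ht⟩ := DFunLike.ne_iff.mp (B.repr.map_ne_zero_iff.mpr hne)
  rw [repr_sum, Finsupp.zero_apply] at ht
  obtain ⟨j, -, hj⟩ := Finset.exists_ne_zero_of_sum_ne_zero ht
  refine mem_iUnion.mpr ⟨⟨t, ?_⟩, ?_, ht⟩
  · exact Finset.mem_biUnion.mpr ⟨j, Finset.mem_univ j, by simpa using left_ne_zero_of_mul hj⟩
  · rw [← repr_sum, hsum, map_zero, Finsupp.zero_apply]

lemma exp_rat_mul_mem {H : Submonoid ℂ}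
    (mem_of_pow_mem : ∀ {x : ℂ} {n : ℕ}, n ≠ 0 → x ^ n ∈ H → x ∈ H)
    (inv_mem : ∀ {x : ℂ}, x ∈ H → x⁻¹ ∈ H) {a : ℂ} (ha : exp a ∈ H) (q : ℚ) :
    exp (q * a) ∈ H := by
  refine mem_of_pow_mem q.den_ne_zero ?_
  have den_mul : (q.den : ℂ) * (q * a) = q.num * a := by
    rw [← mul_assoc]
    exact congrArg (· * a) (mod_cast Rat.den_mul_eq_num q)
  rw [← exp_nat_mul, den_mul, exp_int_mul]
  obtain ⟨n, hn | hn⟩ := q.num.eq_nat_or_neg <;> rw [hn]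
  · rw [zpow_natCast]
    exact pow_mem ha n
  · rw [zpow_neg, zpow_natCast]
    exact inv_mem (pow_mem ha n)

lemma mem_algebraicClosure_of_pow_mem {k K : Type*} [Field k] [Field K] [Algebra k K] {x : K}
    {n : ℕ} (hn : n ≠ 0) (hx : x ^ n ∈ algebraicClosure k K) : x ∈ algebraicClosure k K := by
  rw [mem_algebraicClosure_iff] at hx ⊢
  exact .of_pow (Nat.pos_of_ne_zero hn) hx

lemma isAlgebraic_exp_rat_mul {a : ℂ} (ha : IsAlgebraic ℚ (exp a)) (q : ℚ) :
    IsAlgebraic ℚ (exp (q * a)) :=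
  mem_algebraicClosure_iff.mp <| exp_rat_mul_mem (H := (algebraicClosure ℚ ℂ).toSubmonoid)
    mem_algebraicClosure_of_pow_mem (algebraicClosure ℚ ℂ).inv_mem
    (mem_algebraicClosure_iff.mpr ha) q

open scoped Classical in
lemma finite_setOf_rat_sum_mul_exp_eq_zero {ι : Type*} [Fintype ι] (lam : ι → ℂ) {a : ι → ℂ}
    (ha : ∀ j, IsAlgebraic ℚ (exp (a j))) (j₀ : ι) :
    {q : ℚ | ∑ j, lam j * exp (q * a j) = 0 ∧
      ∑ j with EqModTorsion (exp (a j)) (exp (a j₀)), lam j * exp (q * a j) ≠ 0}.Finite := by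
  have : IsAlgClosed (algebraicClosure ℚ ℂ) := (algebraicClosure.isAlgClosure ℚ ℂ).isAlgClosed
  have : Algebra.IsAlgebraic ℚ (algebraicClosure ℚ ℂ) := algebraicClosure.isAlgebraic ℚ ℂ
  let γ (j : ι) : AddChar ℚ (algebraicClosure ℚ ℂ) :=
    { toFun q := ⟨exp (q * a j), mem_algebraicClosure_iff.mpr (isAlgebraic_exp_rat_mul (ha j) q)⟩
      map_zero_eq_one' := Subtype.ext (by simp)
      map_add_eq_mul' q r := Subtype.ext (by simp [add_mul, exp_add]) }
  have γ_smul (j : ι) (q : ℚ) : γ j q • lam j = lam j * exp (q * a j) := mul_comm _ _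
  have eqModTorsion_iff (j : ι) :
      EqModTorsion (γ j 1) (γ j₀ 1) ↔ EqModTorsion (exp (a j)) (exp (a j₀)) := by
    simp [EqModTorsion, Subtype.ext_iff, γ]
  simpa only [γ_smul, eqModTorsion_iff] using finite_setOf_sum_addChar_smul_eq_zero lam γ j₀

end RationalExponents

section Derivation

variable {k L : Type*} [Field k] [CharZero k] [Field L] [Algebra k L]

variable (k L) in
lemma formallySmooth_of_charZero : Algebra.FormallySmooth k L := by
  obtain ⟨s, hs⟩ := exists_isTranscendenceBasis k L
  have := hs.isAlgebraic_field
  exact .of_algebraicIndependent_of_isSeparable hs.1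

open KaehlerDifferential TensorProduct Polynomial in
lemma kaehlerDifferential_D_ne_zero_of_transcendental {x : L} (hx : Transcendental k x) :
    D k L x ≠ 0 := by
  let : Algebra k[X] L := (aeval x).toAlgebra
  have : IsScalarTower k k[X] L := .of_algHom (aeval x)
  have : FaithfulSMul k[X] L :=
    (faithfulSMul_iff_algebraMap_injective _ _).mpr (transcendental_iff_injective.mp hx)
  let := FractionRing.liftAlgebra k[X] L
  have : Algebra.FormallyEtale k[X] (FractionRing k[X]) := .of_isLocalization (nonZeroDivisors k[X])
  have : CharZero (FractionRing k[X]) := IsFractionRing.charZero k[X]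
  have := formallySmooth_of_charZero (FractionRing k[X]) L
  have : Algebra.FormallySmooth k[X] L := .comp _ (FractionRing k[X]) _
  have mapBaseChange_injective : Function.Injective (mapBaseChange k k[X] L) :=
    (injective_iff_map_eq_zero _).mpr fun y hy ↦ by
      obtain ⟨z, rfl⟩ := (Algebra.H1Cotangent.exact_δ_mapBaseChange k k[X] L y).mp hy
      rw [Subsingleton.elim z 0, map_zero]
  have one_tmul_D_X_ne_zero : (1 : L) ⊗ₜ[k[X]] D k k[X] X ≠ 0 := fun h ↦ by
    simpa using congr(AlgebraTensorModule.rid k[X] L L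
      ((polynomialEquiv k).toLinearMap.baseChange L $h))
  have D_x : mapBaseChange k k[X] L (1 ⊗ₜ D k k[X] X) = D k L x := by
    simp [show algebraMap k[X] L X = x from aeval_X x]
  rw [← D_x]
  exact (map_ne_zero_iff _ mapBaseChange_injective).mpr one_tmul_D_X_ne_zero

lemma exists_derivation_forall_ne_zero (E : Finset L) (hE : ∀ x ∈ E, Transcendental k x) :
    ∃ D : Derivation k L L, ∀ x ∈ E, D x ≠ 0 := by
  have : CharZero L := charZero_of_injective_algebraMap (algebraMap k L).injective
  obtain ⟨φ, hφ⟩ := Module.exists_dual_forall_apply_ne_zero (K := L)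
    (fun x : E ↦ KaehlerDifferential.D k L x)
    fun x ↦ kaehlerDifferential_D_ne_zero_of_transcendental (hE x x.2)
  exact ⟨φ.compDer (KaehlerDifferential.D k L), fun x hx ↦ hφ ⟨x, hx⟩⟩

end Derivation

section FieldOfConstants

variable {k L : Type*} [Field k] [Field L] [Algebra k L]

/-- The constants of a derivation of a field, as an intermediate field. -/
def fieldOfConstants (D : Derivation k L L) : IntermediateField k L where
  carrier := {x | D x = 0}
  mul_mem' {x y} (hx : D x = 0) (hy : D y = 0) := show D (x * y) = 0 by simp [hx, hy]
  add_mem' {x y} (hx : D x = 0) (hy : D y = 0) := show D (x + y) = 0 by simp [hx, hy]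
  algebraMap_mem' := D.map_algebraMap
  inv_mem' x (hx : D x = 0) := show D x⁻¹ = 0 by simp [D.leibniz_inv, hx]

lemma exists_derivation_eq_zero_iff_mem_intermediateField [CharZero k] (E : Finset L)
    (hE : ∀ x ∈ E, Transcendental k x) :
    ∃ (C : IntermediateField k L) (D : Derivation C L L),
      (∀ x, D x = 0 ↔ x ∈ C) ∧ ∀ x ∈ E, x ∉ C := by
  obtain ⟨D, hD⟩ := exists_derivation_forall_ne_zero E hE
  let D' : L →ₗ[fieldOfConstants D] L :=
    { toFun := D
      map_add' := D.map_add
      map_smul' := fun ⟨c, (hc : D c = 0)⟩ x ↦ show D (c * x) = c * D x by simp [hc] }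
  exact ⟨fieldOfConstants D, .mk' D' D.leibniz, fun _ ↦ Iff.rfl, hD⟩

end FieldOfConstants

section FiniteRankOn

variable {C L X : Type*} [Field C] [Field L] [Algebra C L] {S T : Set X} {φ ψ : X → L}

variable (C) in
/-- The values of `φ` on `S` lie in a finite dimensional `C`-subspace of `L`. Such functions play
the role of bounded functions: every valuation trivial on `C` takes finitely many values on them. -/
def FiniteRankOn (S : Set X) (φ : X → L) : Prop :=
  ∃ W : Submodule C L, W.FG ∧ MapsTo φ S W

namespace FiniteRankOn

lemma mono (h : FiniteRankOn C S φ) (hTS : T ⊆ S) : FiniteRankOn C T φ :=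
  let ⟨W, hW, hφ⟩ := h
  ⟨W, hW, hφ.mono_left hTS⟩

lemma congr (h : FiniteRankOn C S φ) (hφψ : EqOn φ ψ S) : FiniteRankOn C S ψ :=
  let ⟨W, hW, hφ⟩ := h
  ⟨W, hW, hφ.congr hφψ⟩

lemma add (hφ : FiniteRankOn C S φ) (hψ : FiniteRankOn C S ψ) :
    FiniteRankOn C S fun s ↦ φ s + ψ s :=
  let ⟨W, hW, hφ⟩ := hφ
  let ⟨W', hW', hψ⟩ := hψ
  ⟨W ⊔ W', hW.sup hW', fun _ hs ↦ Submodule.add_mem_sup (hφ hs) (hψ hs)⟩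

lemma sub (hφ : FiniteRankOn C S φ) (hψ : FiniteRankOn C S ψ) :
    FiniteRankOn C S fun s ↦ φ s - ψ s :=
  let ⟨W, hW, hφ⟩ := hφ
  let ⟨W', hW', hψ⟩ := hψ
  ⟨W ⊔ W', hW.sup hW', fun _ hs ↦ sub_mem (Submodule.mem_sup_left (hφ hs))
    (Submodule.mem_sup_right (hψ hs))⟩

lemma mul (hφ : FiniteRankOn C S φ) (hψ : FiniteRankOn C S ψ) :
    FiniteRankOn C S fun s ↦ φ s * ψ s :=
  let ⟨W, hW, hφ⟩ := hφ
  let ⟨W', hW', hψ⟩ := hψ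
  ⟨W * W', hW.mul hW', fun _ hs ↦ Submodule.mul_mem_mul (hφ hs) (hψ hs)⟩

lemma of_mapsTo_singleton_span (x : L) (h : MapsTo φ S (Submodule.span C {x})) :
    FiniteRankOn C S φ :=
  ⟨_, Submodule.fg_span_singleton x, h⟩

lemma const (x : L) : FiniteRankOn C S fun _ ↦ x :=
  of_mapsTo_singleton_span x fun _ _ ↦ Submodule.mem_span_singleton_self x

lemma of_mem_range (h : ∀ s ∈ S, φ s ∈ (algebraMap C L).range) : FiniteRankOn C S φ :=
  of_mapsTo_singleton_span 1 fun s hs ↦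
    let ⟨c, hc⟩ := h s hs
    Submodule.mem_span_singleton.mpr ⟨c, by rw [← hc, Algebra.smul_def, mul_one]⟩

lemma sum {ι : Type*} {J : Finset ι} {φ : ι → X → L} (h : ∀ j ∈ J, FiniteRankOn C S (φ j)) :
    FiniteRankOn C S fun s ↦ ∑ j ∈ J, φ j s := by
  choose! W hW hφ using h
  refine ⟨⨆ j ∈ J, W j, Submodule.fg_biSup J W hW, fun s hs ↦ ?_⟩
  exact sum_mem fun j hj ↦ Submodule.mem_iSup_of_mem j (Submodule.mem_iSup_of_mem hj (hφ j hj hs))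

lemma derivation (D : Derivation C L L) (h : FiniteRankOn C S φ) :
    FiniteRankOn C S fun s ↦ D (φ s) :=
  let ⟨W, hW, hφ⟩ := h
  ⟨W.map D.toLinearMap, hW.map _, fun _ hs ↦ Submodule.mem_map_of_mem (hφ hs)⟩

end FiniteRankOn

/-- The Wronskian of `g a` and `h b` divided by `g h`. The factors `g` and `h` enter only through
their logarithmic derivatives. -/
def twistedWronskian (D : Derivation C L L) (a g b h : L) : L :=
  a * D b - b * D a + a * b * (D h / h - D g / g)

variable (D : Derivation C L L)

lemma derivation_mul_div_mul {a g h : L} (b : L) (ha : a ≠ 0) (hg : g ≠ 0) (hh : h ≠ 0) :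
    D (h * b / (g * a)) = twistedWronskian D a g b h * h / (a ^ 2 * g) := by
  rw [D.leibniz_div, twistedWronskian]
  simp only [Derivation.leibniz, smul_eq_mul]
  field

lemma sum_erase_twistedWronskian_mul_eq_zero {ι : Type*} [DecidableEq ι] {J : Finset ι}
    {lam γ : ι → L} (hγ : ∀ j ∈ J, γ j ≠ 0) (hsum : ∑ j ∈ J, lam j * γ j = 0) {j₀ : ι}
    (hj₀ : j₀ ∈ J) (hlam : lam j₀ ≠ 0) :
    ∑ j ∈ J.erase j₀, twistedWronskian D (lam j₀) (γ j₀) (lam j) (γ j) * γ j = 0 := by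
  have sum_quotients : ∑ j ∈ J, γ j * lam j / (γ j₀ * lam j₀) = 0 := by
    simp only [← Finset.sum_div, mul_comm (γ _), hsum, zero_div]
  have sum_derivatives := congrArg D sum_quotients
  rw [map_sum, map_zero, Finset.sum_congr rfl fun j hj ↦
    derivation_mul_div_mul D (lam j) hlam (hγ j₀ hj₀) (hγ j hj), ← Finset.sum_div,
    div_eq_zero_iff, or_iff_left (by simp [hlam, hγ j₀ hj₀]), ← Finset.add_sum_erase _ _ hj₀]
    at sum_derivatives
  have wronskian_self : twistedWronskian D (lam j₀) (γ j₀) (lam j₀) (γ j₀) = 0 := by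
    rw [twistedWronskian, sub_self, sub_self, mul_zero, add_zero]
  rwa [wronskian_self, zero_mul, zero_add] at sum_derivatives

lemma FiniteRankOn.twistedWronskian {D : Derivation C L L} {a g b h : X → L}
    (ha : FiniteRankOn C S a) (hb : FiniteRankOn C S b)
    (hg : FiniteRankOn C S fun s ↦ D (g s) / g s)
    (hh : FiniteRankOn C S fun s ↦ D (h s) / h s) :
    FiniteRankOn C S fun s ↦ twistedWronskian D (a s) (g s) (b s) (h s) :=
  ((ha.mul (hb.derivation D)).sub (hb.mul (ha.derivation D))).add ((ha.mul hb).mul (hh.sub hg))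

lemma erase_nonempty_of_sum_eq_zero {ι M : Type*} [DecidableEq ι] [AddCommMonoid M] {J : Finset ι}
    {φ : ι → M} {j : ι} (hj : j ∈ J) (hne : φ j ≠ 0) (hsum : ∑ i ∈ J, φ i = 0) :
    (J.erase j).Nonempty := by
  by_contra hempty
  rw [← Finset.add_sum_erase _ _ hj, Finset.not_nonempty_iff_eq_empty.mp hempty,
    Finset.sum_empty, add_zero] at hsum
  exact hne hsum

-- Dividing by one term and differentiating gives a shorter relation of the same kind, unless one of
-- the new coefficients vanishes infinitely often, which yields the conclusion.
lemma exists_derivation_div_eq_zero_of_sum_mul_eq_zero {ι : Type*} {J : Finset ι}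
    {lam γ : ι → X → L} (hJ : J.Nonempty) (hS : S.Infinite)
    (lam_rank : ∀ j ∈ J, FiniteRankOn C S (lam j)) (lam_ne : ∀ j ∈ J, ∀ s ∈ S, lam j s ≠ 0)
    (γ_ne : ∀ j ∈ J, ∀ s ∈ S, γ j s ≠ 0)
    (γ_rank : ∀ j ∈ J, FiniteRankOn C S fun s ↦ D (γ j s) / γ j s)
    (hsum : ∀ s ∈ S, ∑ j ∈ J, lam j s * γ j s = 0) :
    ∃ i ∈ J, ∃ j ∈ J, i ≠ j ∧ ∃ S' ⊆ S, S'.Infinite ∧ ∃ A B : X → L,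
      FiniteRankOn C S' A ∧ FiniteRankOn C S' B ∧
      ∀ s ∈ S', A s ≠ 0 ∧ B s ≠ 0 ∧ D (γ i s * A s / (γ j s * B s)) = 0 := by
  classical
  induction J using Finset.eraseInduction generalizing lam S with | _ J ih
  obtain ⟨j₀, hj₀⟩ := hJ
  let μ (j : ι) (s : X) : L := twistedWronskian D (lam j₀ s) (γ j₀ s) (lam j s) (γ j s)
  by_cases! hex : ∃ j ∈ J.erase j₀, {s ∈ S | μ j s = 0}.Infinite
  · obtain ⟨j, hj, hinf⟩ := hex
    have hjJ := Finset.mem_of_mem_erase hj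
    refine ⟨j, hjJ, j₀, hj₀, Finset.ne_of_mem_erase hj, _, sep_subset _ _, hinf, lam j, lam j₀,
      (lam_rank j hjJ).mono (sep_subset _ _), (lam_rank j₀ hj₀).mono (sep_subset _ _), ?_⟩
    rintro s ⟨hs, (hμ : twistedWronskian .. = 0)⟩
    refine ⟨lam_ne j hjJ s hs, lam_ne j₀ hj₀ s hs, ?_⟩
    rw [derivation_mul_div_mul D _ (lam_ne j₀ hj₀ s hs) (γ_ne j₀ hj₀ s hs) (γ_ne j hjJ s hs), hμ,
      zero_mul, zero_div]
  let S₁ := S \ ⋃ j ∈ J.erase j₀, {s ∈ S | μ j s = 0}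
  have S₁_subset : S₁ ⊆ S := sdiff_subset
  have S₁_infinite : S₁.Infinite := hS.sdiff (Finite.biUnion (Finset.finite_toSet _) hex)
  obtain ⟨s₀, hs₀⟩ := hS.nonempty
  have term_ne_zero : (fun j ↦ lam j s₀ * γ j s₀) j₀ ≠ 0 :=
    mul_ne_zero (lam_ne j₀ hj₀ s₀ hs₀) (γ_ne j₀ hj₀ s₀ hs₀)
  have of_erase {j} (hj : j ∈ J.erase j₀) : j ∈ J := Finset.mem_of_mem_erase hj
  obtain ⟨i, hi, j, hj, hij, S', hS', rest⟩ := ih j₀ hj₀ (lam := μ)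
    (erase_nonempty_of_sum_eq_zero hj₀ term_ne_zero (hsum s₀ hs₀)) S₁_infinite
    (fun j hj ↦ ((lam_rank j₀ hj₀).twistedWronskian (lam_rank j (of_erase hj)) (γ_rank j₀ hj₀)
      (γ_rank j (of_erase hj))).mono S₁_subset)
    (fun j hj s hs hμ ↦ hs.2 (mem_biUnion hj ⟨hs.1, hμ⟩))
    (fun j hj s hs ↦ γ_ne j (of_erase hj) s hs.1)
    (fun j hj ↦ (γ_rank j (of_erase hj)).mono S₁_subset)
    (fun s hs ↦ sum_erase_twistedWronskian_mul_eq_zero D (fun j hj ↦ γ_ne j hj s hs.1)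
      (hsum s hs.1) hj₀ (lam_ne j₀ hj₀ s hs.1))
  exact ⟨i, of_erase hi, j, of_erase hj, hij, S', hS'.trans S₁_subset, rest⟩

end FiniteRankOn

section Valuation

lemma derivation_eq_zero_of_isIntegral {C L : Type*} [Field C] [CharZero C] [Field L] [Algebra C L]
    (D : Derivation C L L) {x : L} (hx : IsIntegral C x) : D x = 0 := by
  have chain_rule := D.map_aeval (minpoly C x) x
  rw [minpoly.aeval, map_zero, eq_comm, smul_eq_zero] at chain_rule
  exact chain_rule.resolve_left
    ((minpoly.irreducible hx).separable.aeval_derivative_ne_zero (minpoly.aeval _ _))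

lemma isIntegral_of_forall_mem_valuationSubring {k L : Type*} [Field k] [Field L] [Algebra k L]
    {C : IntermediateField k L} {x : L}
    (hx : ∀ V : ValuationSubring L, (C : Set L) ⊆ V → x ∈ V) : IsIntegral C x := by
  have mem_iInf : x ∈ ⨅ V : {V : ValuationSubring L // (C : Set L) ⊆ V.toSubring},
      V.1.toSubring := Subring.mem_iInf.mpr fun V ↦ hx V.1 V.2
  have closure_eq : Subring.closure (C : Set L) = C.toSubfield.toSubring :=
    Subring.closure_eq C.toSubfield.toSubring
  rw [iInf_valuationSubring_superset, closure_eq] at mem_iInf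
  exact mem_iInf

variable {C L Γ₀ : Type*} [Field C] [Field L] [Algebra C L] [LinearOrderedCommGroupWithZero Γ₀]
  (v : Valuation L Γ₀) [v.IsTrivialOn C]

variable (C) in
lemma linearIndependent_of_injective_valuation {ι : Type*} {x : ι → L} (hx : ∀ i, x i ≠ 0)
    (hv : (fun i ↦ v (x i)).Injective) : LinearIndependent C x := by
  classical
  refine linearIndependent_iff'.mpr fun s g hg i hi ↦ ?_
  by_contra hgi
  have valuation_smul {j : ι} (hj : g j ≠ 0) : v (g j • x j) = v (x j) := by
    rw [Algebra.smul_def, map_mul, Valuation.IsTrivialOn.eq_one _ hj, one_mul]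
  obtain ⟨m, hm, hmax⟩ := Finset.exists_max_image (s.filter (g · ≠ 0)) (fun j ↦ v (x j))
    ⟨i, Finset.mem_filter.mpr ⟨hi, hgi⟩⟩
  have sum_filter : ∑ j ∈ s with g j ≠ 0, g j • x j = 0 := by
    rw [← hg]
    exact Finset.sum_filter_of_ne fun j _ hj hgj ↦ hj (by rw [hgj, zero_smul])
  have valuation_sum : v (∑ j ∈ s with g j ≠ 0, g j • x j) = v (g m • x m) := by
    refine v.map_sum_eq_of_lt hm fun j hj ↦ ?_
    rw [Finset.mem_sdiff, Finset.mem_singleton] at hj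
    rw [valuation_smul (Finset.mem_filter.mp hj.1).2, valuation_smul (Finset.mem_filter.mp hm).2]
    exact (hmax j hj.1).lt_of_ne (hv.ne hj.2)
  rw [sum_filter, map_zero, valuation_smul (Finset.mem_filter.mp hm).2, eq_comm, map_eq_zero]
    at valuation_sum
  exact hx m valuation_sum

lemma finite_image_valuation_of_fg {W : Submodule C L} (hW : W.FG) : (v '' W).Finite := by
  have : Module.Finite C W := .of_fg hW
  choose! x hxW hvx using fun a (ha : a ∈ v '' W) ↦ ha
  have linearIndependent : LinearIndependent C fun a : ↥(v '' W \ {0}) ↦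
      (⟨x a, hxW a a.2.1⟩ : W) := by
    refine .of_comp W.subtype (linearIndependent_of_injective_valuation C v (fun a ha ↦ a.2.2 ?_)
      fun a b hab ↦ Subtype.ext ?_)
    · rw [mem_singleton_iff, ← hvx a a.2.1, show x a = 0 from ha, map_zero]
    · simpa [hvx a a.2.1, hvx b b.2.1] using hab
  exact .of_sdiff linearIndependent.finite (finite_singleton 0)

lemma FiniteRankOn.finite_image_valuation {X : Type*} {S : Set X} {φ : X → L}
    (h : FiniteRankOn C S φ) : ((fun s ↦ v (φ s)) '' S).Finite := by
  obtain ⟨W, hW, hφ⟩ := h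
  refine (finite_image_valuation_of_fg v hW).subset ?_
  rintro _ ⟨s, hs, rfl⟩
  exact mem_image_of_mem v (hφ hs)

end Valuation

section StableDirection

/-- Every infinite subset of `S` has the direction space `U`. -/
def HasStableDirection {k V : Type*} [Ring k] [AddCommGroup V] [Module k V] (S : Set V)
    (U : Submodule k V) : Prop :=
  ∀ S' ⊆ S, S'.Infinite → vectorSpan k S' = U

namespace HasStableDirection

variable {k V : Type*} [Ring k] [AddCommGroup V] [Module k V] {S T : Set V} {U : Submodule k V}

lemma mono (h : HasStableDirection S U) (hTS : T ⊆ S) : HasStableDirection T U :=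
  fun S' hS' ↦ h S' (hS'.trans hTS)

lemma sub_mem (h : HasStableDirection S U) (hS : S.Infinite) {s t : V} (hs : s ∈ S) (ht : t ∈ S) :
    s - t ∈ U :=
  h S Subset.rfl hS ▸ vsub_mem_vectorSpan k hs ht

end HasStableDirection

lemma exp_mul_mem_of_mem_span {H : Submonoid ℂ}
    (mem_of_pow_mem : ∀ {x : ℂ} {n : ℕ}, n ≠ 0 → x ^ n ∈ H → x ∈ H)
    (inv_mem : ∀ {x : ℂ}, x ∈ H → x⁻¹ ∈ H) {w : ℂ} {s : Set ℂ} (hs : ∀ u ∈ s, exp (w * u) ∈ H)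
    {u : ℂ} (hu : u ∈ Submodule.span ℚ s) : exp (w * u) ∈ H := by
  induction hu using Submodule.span_induction with
  | mem u hu => exact hs u hu
  | zero => simp
  | add u u' _ _ hu hu' =>
    rw [mul_add, exp_add]
    exact H.mul_mem hu hu'
  | smul q u _ hu =>
    rw [Rat.smul_def, mul_left_comm]
    exact exp_rat_mul_mem mem_of_pow_mem inv_mem hu q

/-- The frequencies `w` for which `exp (w u)` lies in `C` for every `u` in `U`. -/
def frequenciesInto (C : IntermediateField ℚ ℂ) (U : Submodule ℚ ℂ) : AddSubgroup ℂ where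
  carrier := {w | ∀ u ∈ U, exp (w * u) ∈ C}
  zero_mem' u _ := by simp
  add_mem' {w w'} hw hw' u hu := by
    rw [add_mul, exp_add]
    exact C.mul_mem (hw u hu) (hw' u hu)
  neg_mem' {w} hw u hu := by
    rw [neg_mul, exp_neg]
    exact C.inv_mem (hw u hu)

variable {C : IntermediateField ℚ ℂ} {D : Derivation C ℂ ℂ} {S : Set ℂ} {U : Submodule ℚ ℂ} {w : ℂ}

lemma FiniteRankOn.exp_mul (hU : HasStableDirection S U) (hS : S.Infinite)
    (hw : w ∈ frequenciesInto C U) : FiniteRankOn C S fun s ↦ exp (w * s) := by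
  obtain ⟨s₀, hs₀⟩ := hS.nonempty
  have translate_rank : FiniteRankOn C S fun s ↦ exp (w * (s - s₀)) :=
    .of_mem_range fun s hs ↦ ⟨⟨_, hw _ (hU.sub_mem hS hs hs₀)⟩, rfl⟩
  refine (translate_rank.mul (.const (exp (w * s₀)))).congr fun s _ ↦ ?_
  dsimp only
  rw [← exp_add, ← mul_add, sub_add_cancel]

variable (D w) in
/-- The logarithmic derivative of `exp (w u)` as an additive function of `u`. -/
def logDerivExp : ℂ →+ ℂ where
  toFun u := D (exp (w * u)) / exp (w * u)
  map_zero' := by simp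
  map_add' u v := by
    rw [mul_add, exp_add, D.leibniz]
    simp only [smul_eq_mul]
    field [exp_ne_zero (w * u), exp_ne_zero (w * v)]

variable (D w) in
lemma FiniteRankOn.logDerivExp (hU : HasStableDirection S U) (hS : S.Infinite) (hfg : U.FG) :
    FiniteRankOn C S (logDerivExp D w) := by
  obtain ⟨s₀, hs₀⟩ := hS.nonempty
  obtain ⟨t, rfl⟩ := hfg
  let f := (_root_.logDerivExp D w).toRatLinearMap
  have translate_rank : FiniteRankOn C S fun s ↦ f (s - s₀) := by
    refine ⟨.span C (f '' t), Submodule.fg_span (t.finite_toSet.image f), fun s hs ↦ ?_⟩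
    refine Submodule.span_le_restrictScalars ℚ C (f '' t) ?_
    rw [← Submodule.map_span]
    exact Submodule.mem_map_of_mem (hU.sub_mem hS hs hs₀)
  refine (translate_rank.add (.const (f s₀))).congr fun s _ ↦ ?_
  dsimp only
  rw [← map_add, sub_add_cancel]
  rfl

lemma valuation_exp_mul_eq_one {Γ₀ : Type*} [LinearOrderedCommGroupWithZero Γ₀]
    (v : Valuation ℂ Γ₀) {T : Set ℂ} (hT : ∀ s ∈ T, ∀ t ∈ T, v (exp (w * s)) = v (exp (w * t)))
    {u : ℂ} (hu : u ∈ vectorSpan ℚ T) : v (exp (w * u)) = 1 := by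
  refine exp_mul_mem_of_mem_span (H := MonoidHom.mker v) (fun {x n} hn hx ↦ ?_) (fun {x} hx ↦ ?_)
    ?_ hu
  · rw [MonoidHom.mem_mker, map_pow] at hx
    exact (pow_eq_one_iff.mp hx).resolve_right hn
  · rw [MonoidHom.mem_mker] at hx ⊢
    rw [map_inv₀, hx, inv_one]
  · rintro _ ⟨s, hs, t, ht, rfl⟩
    change v (exp (w * (s - t))) = 1
    rw [mul_sub, exp_sub, map_div₀, hT s hs t ht, div_self]
    exact v.ne_zero_iff.mpr (exp_ne_zero _)

lemma exists_infinite_setOf_mem_eq {α β : Type*} {S : Set α} (hS : S.Infinite) {f : α → β}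
    (hf : (f '' S).Finite) : ∃ b, {s ∈ S | f s = b}.Infinite := by
  by_contra! hfin
  exact hS (.of_finite_fibers f hf fun b _ ↦ hfin b)

-- A valuation trivial on `C` takes finitely many values on `A` and `B`, hence on `exp (w s)` as `s`
-- runs through `S`; so `exp (w u)` is a unit for the differences `u` of an infinite subset of `S`.
lemma mem_frequenciesInto_of_exp_mul_div_mem (hD : ∀ x, D x = 0 → x ∈ C)
    (hU : HasStableDirection S U) (hS : S.Infinite) {A B : ℂ → ℂ} (hA : FiniteRankOn C S A)
    (hB : FiniteRankOn C S B) (A_ne : ∀ s ∈ S, A s ≠ 0) (B_ne : ∀ s ∈ S, B s ≠ 0)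
    (h : ∀ s ∈ S, exp (w * s) * A s / B s ∈ C) : w ∈ frequenciesInto C U := by
  intro u hu
  refine hD _ (derivation_eq_zero_of_isIntegral D
    (isIntegral_of_forall_mem_valuationSubring fun V hV ↦ ?_))
  let v := V.valuation
  have : v.IsTrivialOn C := .of_le_one v fun c ↦ (V.valuation_le_one_iff _).mpr (hV c.2)
  have v_exp (s) (hs : s ∈ S) : v (exp (w * s)) = v (B s) / v (A s) := by
    have v_quotient : v (exp (w * s) * A s / B s) = 1 :=
      Valuation.IsTrivialOn.eq_one (v := v) (⟨_, h s hs⟩ : C)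
        (by simp [Subtype.ext_iff, A_ne s hs, B_ne s hs])
    rwa [map_div₀, map_mul, div_eq_one_iff_eq (by simpa using B_ne s hs),
      ← eq_div_iff (by simpa using A_ne s hs)] at v_quotient
  have finite_image : ((fun s ↦ (v (A s), v (B s))) '' S).Finite :=
    ((hA.finite_image_valuation v).prod (hB.finite_image_valuation v)).subset
      (image_subset_iff.mpr fun s hs ↦ ⟨mem_image_of_mem _ hs, mem_image_of_mem _ hs⟩)
  obtain ⟨⟨a, b⟩, fiber_infinite⟩ := exists_infinite_setOf_mem_eq hS finite_image
  rw [← hU _ (sep_subset _ _) fiber_infinite] at hu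
  refine (V.valuation_le_one_iff _).mp (valuation_exp_mul_eq_one v ?_ hu).le
  rintro s ⟨hs, hsab⟩ t ⟨ht, htab⟩
  have := hsab.trans htab.symm
  rw [v_exp s hs, v_exp t ht, (Prod.mk.inj this).1, (Prod.mk.inj this).2]

end StableDirection

section CosetSum

/-- The value at `s` of the exponential polynomial with coefficient `F μ` at `exp (μ z)`. -/
def expSum (F : ℂ →₀ ℂ) (s : ℂ) : ℂ :=
  ∑ μ ∈ F.support, F μ * exp (μ * s)

open scoped Classical in
/-- The part of `expSum F s` with frequencies in the coset `c` of `G`. -/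
def cosetSum (F : ℂ →₀ ℂ) (G : AddSubgroup ℂ) (c : ℂ ⧸ G) (s : ℂ) : ℂ :=
  ∑ μ ∈ F.support with QuotientAddGroup.mk μ = c, F μ * exp (μ * s)

/-- `expSum F` vanishes at `s` for the reason that all its parts along cosets of `G` do. -/
def SplitsAt (F : ℂ →₀ ℂ) (G : AddSubgroup ℂ) (s : ℂ) : Prop :=
  ∀ c : ℂ ⧸ G, cosetSum F G c s = 0

variable {F : ℂ →₀ ℂ} {G G' : AddSubgroup ℂ} {s : ℂ}

open scoped Classical in
variable (F G s) in
lemma sum_cosetSum :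
    ∑ c ∈ F.support.image (QuotientAddGroup.mk (s := G)), cosetSum F G c s = expSum F s :=
  Finset.sum_fiberwise_of_maps_to (fun _ ↦ Finset.mem_image_of_mem _) _

open scoped Classical in
lemma mem_image_support_of_cosetSum_ne_zero {c : ℂ ⧸ G} (h : cosetSum F G c s ≠ 0) :
    c ∈ F.support.image (QuotientAddGroup.mk (s := G)) := by
  obtain ⟨μ, hμ, -⟩ := Finset.exists_ne_zero_of_sum_ne_zero h
  exact Finset.mem_image.mpr ⟨μ, Finset.mem_filter.mp hμ⟩

open scoped Classical in
lemma splitsAt_iff_forall_mem_support : SplitsAt F G s ↔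
    ∀ ν ∈ F.support, ∑ μ ∈ F.support with μ - ν ∈ G, F μ * exp (μ * s) = 0 := by
  simp only [← QuotientAddGroup.eq_iff_sub_mem]
  refine ⟨fun h ν _ ↦ h ν, fun h c ↦ ?_⟩
  by_contra hc
  obtain ⟨ν, hν, rfl⟩ := Finset.mem_image.mp (mem_image_support_of_cosetSum_ne_zero hc)
  exact hc (h ν hν)

lemma SplitsAt.of_sub_mem_iff (h : SplitsAt F G s)
    (hG : ∀ μ ∈ F.support, ∀ ν ∈ F.support, (μ - ν ∈ G ↔ μ - ν ∈ G')) : SplitsAt F G' s := by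
  classical
  rw [splitsAt_iff_forall_mem_support] at h ⊢
  intro ν hν
  rw [← h ν hν, Finset.filter_congr fun μ hμ ↦ hG μ hμ ν hν]

/-- `cosetSum F G c s` divided by `exp (ν s)` for the chosen representative `ν` of `c`, so that
its frequencies lie in `G`. -/
def normalizedCosetSum (F : ℂ →₀ ℂ) (G : AddSubgroup ℂ) (c : ℂ ⧸ G) (s : ℂ) : ℂ :=
  cosetSum F G c s * exp (-(c.out * s))

lemma normalizedCosetSum_mul_exp (c : ℂ ⧸ G) :
    normalizedCosetSum F G c s * exp (c.out * s) = cosetSum F G c s := by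
  rw [normalizedCosetSum, mul_assoc, ← exp_add, neg_add_cancel, exp_zero, mul_one]

variable {C : IntermediateField ℚ ℂ} {S : Set ℂ} {U : Submodule ℚ ℂ}

variable (F) in
lemma FiniteRankOn.normalizedCosetSum (hU : HasStableDirection S U) (hS : S.Infinite)
    (c : ℂ ⧸ frequenciesInto C U) :
    FiniteRankOn C S (normalizedCosetSum F (frequenciesInto C U) c) := by
  classical
  have term_rank : ∀ μ ∈ {μ ∈ F.support | QuotientAddGroup.mk μ = c},
      FiniteRankOn C S fun s ↦ F μ * exp ((μ - c.out) * s) := fun μ hμ ↦ by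
    refine .mul (.const _) (.exp_mul hU hS (QuotientAddGroup.eq_iff_sub_mem.mp ?_))
    rw [(Finset.mem_filter.mp hμ).2]
    exact c.out_eq.symm
  refine (FiniteRankOn.sum term_rank).congr fun s _ ↦ ?_
  simp only [_root_.normalizedCosetSum, cosetSum, Finset.sum_mul, mul_assoc, ← exp_add,
    sub_eq_add_neg, add_mul, neg_mul]

-- On an infinite set of points where the same coset sums are nonzero, these satisfy a relation to
-- which the differential argument applies, and two of the cosets would coincide.
lemma finite_setOf_not_splitsAt_frequenciesInto {D : Derivation C ℂ ℂ}
    (hD : ∀ x, D x = 0 → x ∈ C) (hU : HasStableDirection S U) (hfg : U.FG)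
    (hF : ∀ s ∈ S, expSum F s = 0) : {s ∈ S | ¬ SplitsAt F (frequenciesInto C U) s}.Finite := by
  classical
  by_contra nonsplit_infinite
  set G := frequenciesInto C U
  let classes := F.support.image (QuotientAddGroup.mk (s := G))
  obtain ⟨J, T_infinite⟩ := exists_infinite_setOf_mem_eq nonsplit_infinite
    (f := fun s ↦ {c ∈ classes | cosetSum F G c s ≠ 0})
    (classes.powerset.finite_toSet.subset (image_subset_iff.mpr fun s _ ↦
      Finset.mem_powerset.mpr (Finset.filter_subset _ _)))
  set T := {s ∈ {s ∈ S | ¬ SplitsAt F G s} | {c ∈ classes | cosetSum F G c s ≠ 0} = J}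
  have hUT : HasStableDirection T U := hU.mono fun s hs ↦ hs.1.1
  have J_nonempty : J.Nonempty := by
    obtain ⟨s, ⟨-, hs⟩, rfl⟩ := T_infinite.nonempty
    obtain ⟨c, hc⟩ := not_forall.mp hs
    exact ⟨c, Finset.mem_filter.mpr ⟨mem_image_support_of_cosetSum_ne_zero hc, hc⟩⟩
  obtain ⟨i, -, j, -, hij, S', hS'T, S'_infinite, A, B, hA, hB, hAB⟩ :=
    exists_derivation_div_eq_zero_of_sum_mul_eq_zero D (lam := normalizedCosetSum F G)
      (γ := fun c s ↦ exp (c.out * s)) J_nonempty T_infinite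
      (fun c _ ↦ .normalizedCosetSum F hUT T_infinite c)
      (fun c hc s hs ↦ by
        rw [← hs.2] at hc
        exact mul_ne_zero (Finset.mem_filter.mp hc).2 (exp_ne_zero _))
      (fun _ _ _ _ ↦ exp_ne_zero _) (fun c _ ↦ .logDerivExp D _ hUT T_infinite hfg)
      (fun s hs ↦ by
        simp only [normalizedCosetSum_mul_exp]
        rw [← hs.2, Finset.sum_filter_ne_zero, sum_cosetSum, hF s hs.1.1])
  have sub_mem : i.out - j.out ∈ G := by
    refine mem_frequenciesInto_of_exp_mul_div_mem hD (hUT.mono hS'T) S'_infinite hA hB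
      (fun s hs ↦ (hAB s hs).1) (fun s hs ↦ (hAB s hs).2.1) fun s hs ↦ hD _ ?_
    rw [sub_mul, exp_sub, div_mul_eq_mul_div, div_div, (hAB s hs).2.2]
  rw [← QuotientAddGroup.eq_iff_sub_mem] at sub_mem
  exact hij (i.out_eq.symm.trans (sub_mem.trans j.out_eq))

lemma mem_frequenciesInto_algebraicClosure_span {w : ℂ} {t : Set ℂ} :
    w ∈ frequenciesInto (algebraicClosure ℚ ℂ) (.span ℚ t) ↔
      ∀ u ∈ t, IsAlgebraic ℚ (exp (w * u)) := by
  refine ⟨fun hw u hu ↦ mem_algebraicClosure_iff.mp (hw u (Submodule.subset_span hu)),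
    fun hw u hu ↦ ?_⟩
  exact exp_mul_mem_of_mem_span (H := (algebraicClosure ℚ ℂ).toSubmonoid)
    mem_algebraicClosure_of_pow_mem (algebraicClosure ℚ ℂ).inv_mem
    (fun u hu ↦ mem_algebraicClosure_iff.mpr (hw u hu)) hu

lemma finite_setOf_not_splitsAt_algebraicClosure (hU : HasStableDirection S U) (hfg : U.FG)
    (hF : ∀ s ∈ S, expSum F s = 0) :
    {s ∈ S | ¬ SplitsAt F (frequenciesInto (algebraicClosure ℚ ℂ) U) s}.Finite := by
  classical
  obtain ⟨t, rfl⟩ := id hfg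
  let values := ((F.support ×ˢ F.support) ×ˢ t).image fun p ↦ exp ((p.1.1 - p.1.2) * p.2)
  obtain ⟨C, D, hD, transcendental_notMem⟩ := exists_derivation_eq_zero_iff_mem_intermediateField
    (values.filter (Transcendental ℚ ·)) fun x hx ↦ (Finset.mem_filter.mp hx).2
  refine (finite_setOf_not_splitsAt_frequenciesInto (fun x ↦ (hD x).mp) hU hfg hF).subset ?_
  refine fun s ⟨hs, not_splitsAt⟩ ↦ ⟨hs, fun h ↦ not_splitsAt (h.of_sub_mem_iff ?_)⟩
  refine fun μ hμ ν hν ↦ ⟨fun hw ↦ ?_, fun hw u hu ↦ ?_⟩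
  · refine mem_frequenciesInto_algebraicClosure_span.mpr fun u hu ↦ ?_
    by_contra transcendental
    refine transcendental_notMem _ (Finset.mem_filter.mpr ⟨Finset.mem_image.mpr
      ⟨((μ, ν), u), ?_, rfl⟩, transcendental⟩) (hw u (Submodule.subset_span hu))
    exact Finset.mk_mem_product (Finset.mk_mem_product hμ hν) hu
  · exact (hD _).mp (derivation_eq_zero_of_isIntegral D
      (mem_algebraicClosure_iff.mp (hw u hu)).isIntegral.tower_top)

end CosetSum

section ExpPolys

lemma isExpPoly_sum {ι : Type*} (J : Finset ι) (lam mu : ι → ℂ) :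
    IsExpPoly fun z ↦ ∑ i ∈ J, lam i * exp (mu i * z) := by
  refine ⟨J.card, fun i ↦ lam (J.equivFin.symm i), fun i ↦ mu (J.equivFin.symm i), fun z ↦ ?_⟩
  beta_reduce
  rw [← Finset.sum_coe_sort]
  exact (J.equivFin.symm.sum_comp fun i : J ↦ lam i * exp (mu i * z)).symm

/-- The ring `𝓔` of exponential polynomials, as a subalgebra of all functions `ℂ → ℂ`. -/
def expPolys : Subalgebra ℂ (ℂ → ℂ) where
  carrier := {f | IsExpPoly f}
  mul_mem' := by
    rintro f g ⟨M, lam, mu, hf⟩ ⟨N, lam', mu', hg⟩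
    have key := isExpPoly_sum Finset.univ (fun p : Fin M × Fin N ↦ lam p.1 * lam' p.2)
      fun p ↦ mu p.1 + mu' p.2
    rwa [show f * g = _ from funext fun z ↦ ?_]
    rw [Pi.mul_apply, hf, hg, Fintype.sum_mul_sum, Fintype.sum_prod_type]
    simp only [add_mul, exp_add, mul_mul_mul_comm]
  add_mem' := by
    rintro f g ⟨M, lam, mu, hf⟩ ⟨N, lam', mu', hg⟩
    have key := isExpPoly_sum Finset.univ (Sum.elim lam lam') (Sum.elim mu mu')
    rwa [show f + g = _ from funext fun z ↦ ?_]
    simp [hf, hg]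
  algebraMap_mem' c := ⟨1, fun _ ↦ c, 0, by simp⟩

/-- The exponential `exp (μ z)` as an element of `𝓔`. -/
def expMonomial (μ : ℂ) : expPolys :=
  ⟨fun z ↦ exp (μ * z), 1, 1, fun _ ↦ μ, by simp⟩

/-- The element of `𝓔` with coefficient `F μ` at `exp (μ z)`. -/
def expPoly (F : ℂ →₀ ℂ) : expPolys :=
  ∑ μ ∈ F.support, F μ • expMonomial μ

@[simp]
lemma expMonomial_apply (μ z : ℂ) : (expMonomial μ : ℂ → ℂ) z = exp (μ * z) :=
  rfl

@[simp]
lemma expPoly_apply (F : ℂ →₀ ℂ) (z : ℂ) : (expPoly F : ℂ → ℂ) z = expSum F z := by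
  simp [expPoly, expSum]

lemma expMonomial_zero : expMonomial 0 = 1 := by
  ext z
  simp

lemma expMonomial_add (μ ν : ℂ) : expMonomial (μ + ν) = expMonomial μ * expMonomial ν := by
  ext z
  simp [add_mul, exp_add]

lemma expPoly_surjective : Function.Surjective expPoly := by
  classical
  rintro ⟨f, N, lam, mu, hf⟩
  refine ⟨∑ i, .single (mu i) (lam i), ?_⟩
  ext z
  rw [expPoly_apply]
  refine Eq.trans ?_ (hf z).symm
  change Finsupp.sum _ (fun μ c ↦ c * exp (μ * z)) = _
  rw [← Finsupp.sum_finsetSum_index (by simp) (by simp [add_mul])]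
  simp

lemma apply_ne_zero_of_isUnit {f : expPolys} (hf : IsUnit f) (z : ℂ) : (f : ℂ → ℂ) z ≠ 0 :=
  ((hf.map expPolys.val).map (Pi.evalMonoidHom _ z)).ne_zero

lemma eUnit_coe_iff {f : expPolys} : EUnit f ↔ IsUnit f := by
  rw [isUnit_iff_exists_inv]
  refine ⟨fun ⟨_, g, hg, hfg⟩ ↦ ⟨⟨g, hg⟩, Subtype.ext hfg⟩,
    fun ⟨g, hfg⟩ ↦ ⟨f.2, g, g.2, congrArg Subtype.val hfg⟩⟩

lemma EIrreducible.irreducible {f : expPolys} (hf : EIrreducible f) : Irreducible f := by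
  refine ⟨fun h ↦ hf.2.2.1 (eUnit_coe_iff.mpr h), fun g h hfgh ↦ ?_⟩
  rw [← eUnit_coe_iff, ← eUnit_coe_iff]
  exact hf.2.2.2 g h g.2 h.2 (congrArg Subtype.val hfgh)

lemma isRelPrime_of_eIrreducible {f g : expPolys} (hf : EIrreducible f) (hg : EIrreducible g)
    (hfg : ¬ ∃ u, EUnit u ∧ (f : ℂ → ℂ) = u * g) : IsRelPrime f g := by
  rw [hf.irreducible.isRelPrime_iff_not_dvd,
    hf.irreducible.dvd_irreducible_iff_associated hg.irreducible]
  rintro h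
  obtain ⟨u, hu⟩ := h.symm
  refine hfg ⟨(u : expPolys), eUnit_coe_iff.mpr u.isUnit, ?_⟩
  rw [← hu, mul_comm]
  rfl

variable {F F' : ℂ →₀ ℂ} {G : AddSubgroup ℂ} {s w μ : ℂ}

/-- `exp (μ z) - exp (μ s)` as an element of `𝓔`. -/
def expMonomialSub (μ s : ℂ) : expPolys :=
  expMonomial μ - algebraMap ℂ expPolys (exp (μ * s))

@[simp]
lemma expMonomialSub_apply (μ s z : ℂ) :
    (expMonomialSub μ s : ℂ → ℂ) z = exp (μ * z) - exp (μ * s) :=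
  rfl

lemma expMonomialSub_dvd_of_mem_zmultiples (h : μ ∈ AddSubgroup.zmultiples w) :
    expMonomialSub w s ∣ expMonomialSub μ s := by
  rw [AddSubgroup.zmultiples_eq_closure] at h
  induction h using AddSubgroup.closure_induction with
  | mem μ h => rw [mem_singleton_iff.mp h]
  | zero =>
    have : expMonomialSub 0 s = 0 := by simp [expMonomialSub, expMonomial_zero]
    exact this ▸ dvd_zero _
  | add μ ν _ _ hμ hν =>
    have : expMonomialSub (μ + ν) s =
        expMonomial μ * expMonomialSub ν s + exp (ν * s) • expMonomialSub μ s := by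
      ext z
      change _ = exp (μ * z) * (exp (ν * z) - exp (ν * s)) +
        exp (ν * s) * (exp (μ * z) - exp (μ * s))
      rw [expMonomialSub_apply, add_mul, add_mul, exp_add, exp_add]
      ring
    exact this ▸ (hν.mul_left _).add (dvd_smul_of_dvd _ hμ)
  | neg μ _ hμ =>
    have : expMonomialSub (-μ) s =
        (-exp (-μ * s) • expMonomial (-μ)) * expMonomialSub μ s := by
      ext z
      change _ = -exp (-μ * s) * exp (-μ * z) * (exp (μ * z) - exp (μ * s))
      rw [expMonomialSub_apply, neg_mul, neg_mul, exp_neg, exp_neg]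
      field_simp
      ring
    exact this ▸ hμ.mul_left _

-- Modulo `exp (w z) - exp (w s)`, the frequencies in `G` may be evaluated at `s`.
lemma SplitsAt.expMonomialSub_dvd_expPoly (h : SplitsAt F G s)
    (hG : G ≤ AddSubgroup.zmultiples w) : expMonomialSub w s ∣ expPoly F := by
  classical
  rw [expPoly, ← Finset.sum_fiberwise_of_maps_to
    (fun _ ↦ Finset.mem_image_of_mem (QuotientAddGroup.mk (s := G)))]
  refine Finset.dvd_sum fun c _ ↦ ?_
  suffices ∑ μ ∈ F.support with QuotientAddGroup.mk μ = c, F μ • expMonomial μ =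
      ∑ μ ∈ F.support with QuotientAddGroup.mk μ = c,
        F μ • (expMonomial c.out * expMonomialSub (μ - c.out) s) by
    refine this ▸ Finset.dvd_sum fun μ hμ ↦ dvd_smul_of_dvd _ (.mul_left ?_ _)
    refine expMonomialSub_dvd_of_mem_zmultiples (hG (QuotientAddGroup.eq_iff_sub_mem.mp ?_))
    exact (Finset.mem_filter.mp hμ).2.trans c.out_eq.symm
  rw [← sub_eq_zero, ← Finset.sum_sub_distrib]
  calc _ = cosetSum F G c s • (exp (-c.out * s) • expMonomial c.out) := by
        rw [cosetSum, Finset.sum_smul]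
        refine Finset.sum_congr rfl fun μ _ ↦ ?_
        ext z
        change F μ * exp (μ * z) -
            F μ * (exp (c.out * z) * (exp ((μ - c.out) * z) - exp ((μ - c.out) * s))) =
          F μ * exp (μ * s) * (exp (-c.out * s) * exp (c.out * z))
        simp only [mul_sub, mul_assoc, ← exp_add]
        ring_nf
    _ = 0 := by rw [h c, zero_smul]

lemma exists_subset_zmultiples_of_subset_span_singleton {V : Type*} [AddCommGroup V] [Module ℚ V]
    {T : Set V} (hT : T.Finite) {v : V} (hTv : T ⊆ Submodule.span ℚ {v}) :
    ∃ w : V, T ⊆ AddSubgroup.zmultiples w := by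
  have coordinates : ∀ x ∈ T, ∃ q : ℚ, q • v = x := fun x hx ↦
    Submodule.mem_span_singleton.mp (hTv hx)
  choose! q hq using coordinates
  obtain ⟨d, hd⟩ := IsLocalization.exist_integer_multiples_of_finset (nonZeroDivisors ℤ)
    (hT.toFinset.image q)
  refine ⟨(d : ℚ)⁻¹ • v, fun x hx ↦ ?_⟩
  obtain ⟨n, hn⟩ := hd (q x) (Finset.mem_image_of_mem q (hT.mem_toFinset.mpr hx))
  have d_ne_zero : (d : ℚ) ≠ 0 := by exact_mod_cast nonZeroDivisors.coe_ne_zero d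
  have integer_multiple : (n : ℚ) = d * q x := by simpa [zsmul_eq_mul] using hn
  refine AddSubgroup.mem_zmultiples_iff.mpr ⟨n, ?_⟩
  rw [← Int.cast_smul_eq_zsmul ℚ, smul_smul, integer_multiple, mul_right_comm,
    mul_inv_cancel₀ d_ne_zero, one_mul, hq x hx]

open scoped Pointwise in
lemma not_isRelPrime_of_splitsAt (hG : (G : Set ℂ) ⊆ Submodule.span ℚ {w})
    (hF : SplitsAt F G s) (hF' : SplitsAt F' G s) : ¬ IsRelPrime (expPoly F) (expPoly F') := by
  classical
  let T := F.support ∪ F'.support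
  have differences_finite : ((T - T : Finset ℂ) ∩ G : Set ℂ).Finite :=
    (T - T).finite_toSet.inter_of_left _
  obtain ⟨v, hv⟩ := exists_subset_zmultiples_of_subset_span_singleton differences_finite
    (inter_subset_right.trans hG)
  have mem_iff : ∀ μ ∈ T, ∀ ν ∈ T, (μ - ν ∈ G ↔ μ - ν ∈ G ⊓ AddSubgroup.zmultiples v) :=
    fun μ hμ ν hν ↦ ⟨fun h ↦ ⟨h, hv ⟨Finset.sub_mem_sub hμ hν, h⟩⟩, fun h ↦ h.1⟩
  have dvd : ∀ {E : ℂ →₀ ℂ}, E.support ⊆ T → SplitsAt E G s →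
      expMonomialSub v s ∣ expPoly E := fun hET hE ↦
    (hE.of_sub_mem_iff fun μ hμ ν hν ↦
      mem_iff μ (hET hμ) ν (hET hν)).expMonomialSub_dvd_expPoly inf_le_right
  intro h
  refine apply_ne_zero_of_isUnit (h (dvd Finset.subset_union_left hF)
    (dvd Finset.subset_union_right hF')) s ?_
  rw [expMonomialSub_apply, sub_self]

end ExpPolys

section FourExponentials

lemma mul_map_eq_mul_map_of_algebraicIndependent {ι k A : Type*} [CommRing k] [CommRing A]
    [Algebra k A] {y : ι → A} (hy : AlgebraicIndependent k y) {a b c d : A}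
    (ha : a ∈ Submodule.span k (range y)) (hb : b ∈ Submodule.span k (range y))
    (hc : c ∈ Submodule.span k (range y)) (hd : d ∈ Submodule.span k (range y))
    (h : a * d = b * c) (θ : A →ₗ[k] k) : θ a * θ d = θ b * θ c := by
  -- A `k`-linear combination of the `y i` is the value of a linear form at `y`.
  have linear_form : ∀ x ∈ Submodule.span k (range y), ∃ P : MvPolynomial ι k,
      MvPolynomial.aeval y P = x ∧ MvPolynomial.eval (θ ∘ y) P = θ x := fun x hx ↦ by
    induction hx using Submodule.span_induction with
    | mem x hx =>
      obtain ⟨i, rfl⟩ := hx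
      exact ⟨.X i, by simp, by simp⟩
    | zero => exact ⟨0, by simp, by simp⟩
    | add x x' _ _ hx hx' =>
      obtain ⟨P, hPx, hPθ⟩ := hx
      obtain ⟨Q, hQx, hQθ⟩ := hx'
      exact ⟨P + Q, by simp [hPx, hQx], by simp [hPθ, hQθ]⟩
    | smul q x _ hx =>
      obtain ⟨P, hPx, hPθ⟩ := hx
      exact ⟨q • P, by simp [hPx], by simp [hPθ]⟩
  obtain ⟨Pa, hPa, hθa⟩ := linear_form a ha
  obtain ⟨Pb, hPb, hθb⟩ := linear_form b hb
  obtain ⟨Pc, hPc, hθc⟩ := linear_form c hc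
  obtain ⟨Pd, hPd, hθd⟩ := linear_form d hd
  have : Pa * Pd = Pb * Pc := hy (by simp only [map_mul, hPa, hPb, hPc, hPd, h])
  simpa only [map_mul, hθa, hθb, hθc, hθd] using congrArg (MvPolynomial.eval (θ ∘ y)) this

namespace SchanuelConjecture

variable {ι : Type*} {y : ι → ℂ}

lemma exists_algebraicIndependent (hSC : SchanuelConjecture) [Fintype ι]
    (hy : LinearIndependent ℚ y) : ∃ t : Finset ℂ, ↑t ⊆ range y ∪ range (exp ∘ y) ∧
      AlgebraicIndependent ℚ ((↑) : {x // x ∈ t} → ℂ) ∧ Fintype.card ι ≤ t.card := by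
  cases hn : Fintype.card ι with
  | zero =>
    exact ⟨∅, by simp, algebraicIndependent_empty_type_iff.mpr (algebraMap ℚ ℂ).injective, by simp⟩
  | succ n =>
    let e := (Fintype.equivFinOfCardEq hn).symm
    have rank_lt := (Nat.cast_lt.mpr n.lt_succ_self).trans_le (hSC _ _ (hy.comp e e.injective))
    obtain ⟨⟨t, ht, ht_indep⟩, hnt⟩ := exists_lt_of_lt_ciSup' rank_lt
    refine ⟨t, ht.trans (union_subset_union (range_comp_subset_range _ _) ?_), ht_indep,
      Nat.cast_lt.mp hnt⟩
    exact range_comp_subset_range e (exp ∘ y)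

lemma algebraicIndependent_of_isAlgebraic_exp (hSC : SchanuelConjecture) [Finite ι]
    (hy : LinearIndependent ℚ y) (hexp : ∀ i, IsAlgebraic ℚ (exp (y i))) :
    AlgebraicIndependent ℚ y := by
  classical
  have := Fintype.ofFinite ι
  obtain ⟨t, ht, ht_indep, card_le⟩ := hSC.exists_algebraicIndependent hy
  have t_subset : t ⊆ Finset.univ.image y := fun x hx ↦ by
    obtain ⟨i, rfl⟩ | ⟨i, rfl⟩ := ht hx
    · exact Finset.mem_image_of_mem y (Finset.mem_univ i)
    · exact absurd (hexp i) (ht_indep.transcendental ⟨_, hx⟩)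
  obtain rfl : t = Finset.univ.image y :=
    Finset.eq_of_subset_of_card_le t_subset (Finset.card_image_le.trans card_le)
  rw [← algebraicIndependent_subtype_range hy.injective]
  have range_eq : range y = {x | x ∈ Finset.univ.image y} := by ext; simp
  exact range_eq ▸ ht_indep

lemma mul_map_eq_mul_map (hSC : SchanuelConjecture) {a b c d : ℂ} (ha : IsAlgebraic ℚ (exp a))
    (hb : IsAlgebraic ℚ (exp b)) (hc : IsAlgebraic ℚ (exp c)) (hd : IsAlgebraic ℚ (exp d))
    (h : a * d = b * c) (θ : ℂ →ₗ[ℚ] ℚ) : θ a * θ d = θ b * θ c := by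
  obtain ⟨B, hB, span_B, B_indep⟩ := exists_linearIndependent ℚ ({a, b, c, d} : Set ℂ)
  have : Finite B := (toFinite {a, b, c, d}).subset hB
  have B_algebraicIndependent : AlgebraicIndependent ℚ ((↑) : B → ℂ) :=
    hSC.algebraicIndependent_of_isAlgebraic_exp B_indep fun x ↦ by
      obtain h | h | h | h := hB x.2 <;> rwa [h]
  have mem_span : ∀ x ∈ ({a, b, c, d} : Set ℂ),
      x ∈ Submodule.span ℚ (range ((↑) : B → ℂ)) := fun x hx ↦ by
    rw [Subtype.range_coe, span_B]
    exact Submodule.subset_span hx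
  exact mul_map_eq_mul_map_of_algebraicIndependent B_algebraicIndependent (mem_span a (by simp))
    (mem_span b (by simp)) (mem_span c (by simp)) (mem_span d (by simp)) h θ

lemma four_exponentials (hSC : SchanuelConjecture) {w w' u u' : ℂ} (hw : w ≠ 0) (hu : u ≠ 0)
    (hwu : IsAlgebraic ℚ (exp (w * u))) (hwu' : IsAlgebraic ℚ (exp (w * u')))
    (hw'u : IsAlgebraic ℚ (exp (w' * u))) (hw'u' : IsAlgebraic ℚ (exp (w' * u'))) :
    w' ∈ Submodule.span ℚ {w} ∨ u' ∈ Submodule.span ℚ {u} := by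
  by_contra! ⟨hw', hu'⟩
  have wu'_notMem : w * u' ∉ Submodule.span ℚ {w * u} := by
    simpa [Submodule.mem_span_singleton, Rat.smul_def, mul_left_comm _ w, hw] using hu'
  have w'u_notMem : w' * u ∉ Submodule.span ℚ {w * u} := by
    simpa [Submodule.mem_span_singleton, Rat.smul_def, ← mul_assoc, hu] using hw'
  obtain ⟨θ, hθ, θ_ker⟩ := Submodule.exists_le_ker_of_notMem wu'_notMem
  obtain ⟨φ, hφ, φ_ker⟩ := Submodule.exists_le_ker_of_notMem w'u_notMem
  have θ_wu : θ (w * u) = 0 := θ_ker (Submodule.mem_span_singleton_self _)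
  have φ_wu : φ (w * u) = 0 := φ_ker (Submodule.mem_span_singleton_self _)
  have determinant (ψ : ℂ →ₗ[ℚ] ℚ) : ψ (w * u) * ψ (w' * u') = ψ (w * u') * ψ (w' * u) :=
    hSC.mul_map_eq_mul_map hwu hwu' hw'u hw'u' (by ring) ψ
  have θ_w'u : θ (w' * u) = 0 := by simpa [θ_wu, hθ] using determinant θ
  have φ_wu' : φ (w * u') = 0 := by simpa [φ_wu, hφ] using determinant φ
  simpa [θ_wu, φ_wu, θ_w'u, φ_wu', hθ, hφ] using determinant (θ + φ)

end SchanuelConjecture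

end FourExponentials

section FiniteRankZeros

/-- The frequencies `w` for which `exp (w u)` is a root of unity. -/
def torsionFrequencies (u : ℂ) : AddSubgroup ℂ where
  carrier := {w | IsOfFinOrder (exp (w * u))}
  zero_mem' := by simp
  add_mem' hv hw := by
    rw [Set.mem_ofPred_eq, add_mul, exp_add]
    exact hv.mul hw
  neg_mem' {w} hw := by
    obtain ⟨n, hn, hw⟩ := isOfFinOrder_iff_pow_eq_one.mp hw
    refine isOfFinOrder_iff_pow_eq_one.mpr ⟨n, hn, ?_⟩
    rw [neg_mul, exp_neg, inv_pow, hw, inv_one]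

lemma torsionFrequencies_subset_span {u : ℂ} (hu : u ≠ 0) :
    (torsionFrequencies u : Set ℂ) ⊆ Submodule.span ℚ {2 * Real.pi * I / u} := by
  intro w hw
  obtain ⟨n, hn, hw⟩ := isOfFinOrder_iff_pow_eq_one.mp hw
  obtain ⟨m, hm⟩ := exp_eq_one_iff.mp ((exp_nat_mul _ n).trans hw)
  refine Submodule.mem_span_singleton.mpr ⟨m / n, ?_⟩
  have : (n : ℂ) ≠ 0 := mod_cast hn.ne'
  rw [Rat.smul_def]
  push_cast
  field_simp
  linear_combination -hm

variable {F F' : ℂ →₀ ℂ} {G : AddSubgroup ℂ} {S : Set ℂ} {U : Submodule ℚ ℂ} {s₀ u : ℂ}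

open scoped Classical in
lemma finite_setOf_sum_sub_mem_torsionFrequencies_ne_zero
    (hG : ∀ w ∈ G, IsAlgebraic ℚ (exp (w * u))) (hS : ∀ s ∈ S, s - s₀ ∈ Submodule.span ℚ {u})
    (hF : ∀ s ∈ S, SplitsAt F G s) {ν : ℂ} (hν : ν ∈ F.support) :
    {s ∈ S | ∑ μ ∈ F.support with μ - ν ∈ G ⊓ torsionFrequencies u,
      F μ * exp (μ * s) ≠ 0}.Finite := by
  let J := {μ ∈ F.support | μ - ν ∈ G}
  let j₀ : J := ⟨ν, Finset.mem_filter.mpr ⟨hν, by simp⟩⟩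
  have finite_rat := finite_setOf_rat_sum_mul_exp_eq_zero (ι := J)
    (fun μ ↦ F μ * exp ((μ - ν) * s₀)) (a := fun μ ↦ (μ - ν) * u)
    (fun μ ↦ hG _ (Finset.mem_filter.mp μ.2).2) j₀
  refine (finite_rat.image fun q : ℚ ↦ s₀ + q * u).subset ?_
  rintro s ⟨hs, sum_ne_zero⟩
  obtain ⟨q, hq⟩ := Submodule.mem_span_singleton.mp (hS s hs)
  have term_eq (μ : ℂ) : F μ * exp ((μ - ν) * s₀) * exp (q * ((μ - ν) * u)) =
      F μ * exp (μ * s) * exp (-(ν * s)) := by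
    rw [mul_assoc, mul_assoc, ← exp_add, ← exp_add, eq_add_of_sub_eq hq.symm, Rat.smul_def]
    ring_nf
  have torsion_iff (μ : J) : EqModTorsion (exp ((μ - ν) * u)) (exp ((j₀ - ν) * u)) ↔
      μ - ν ∈ torsionFrequencies u := by
    rw [eqModTorsion_iff_isOfFinOrder_div (exp_ne_zero _), sub_self, zero_mul, exp_zero, div_one]
    rfl
  refine ⟨q, ⟨?_, ?_⟩, add_eq_of_eq_sub' (Rat.smul_def q u ▸ hq)⟩
  · simp_rw [term_eq]
    rw [← Finset.sum_mul, Finset.sum_coe_sort J fun μ ↦ F μ * exp (μ * s),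
      splitsAt_iff_forall_mem_support.mp (hF s hs) ν hν, zero_mul]
  · simp_rw [term_eq, torsion_iff]
    rw [← Finset.sum_mul, Finset.sum_filter, Finset.sum_coe_sort J fun μ ↦
      if μ - ν ∈ torsionFrequencies u then F μ * exp (μ * s) else 0, ← Finset.sum_filter,
      Finset.filter_filter]
    exact mul_ne_zero (by simpa only [AddSubgroup.mem_inf] using sum_ne_zero) (exp_ne_zero _)

lemma finite_setOf_not_splitsAt_inf_torsionFrequencies
    (hG : ∀ w ∈ G, IsAlgebraic ℚ (exp (w * u))) (hS : ∀ s ∈ S, s - s₀ ∈ Submodule.span ℚ {u})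
    (hF : ∀ s ∈ S, SplitsAt F G s) :
    {s ∈ S | ¬ SplitsAt F (G ⊓ torsionFrequencies u) s}.Finite := by
  classical
  refine (F.support.finite_toSet.biUnion fun ν hν ↦
    finite_setOf_sum_sub_mem_torsionFrequencies_ne_zero hG hS hF hν).subset ?_
  rintro s ⟨hs, hsplit⟩
  rw [splitsAt_iff_forall_mem_support] at hsplit
  push Not at hsplit
  obtain ⟨ν, hν, hne⟩ := hsplit
  exact mem_biUnion hν ⟨hs, hne⟩

lemma exists_hasStableDirection {k V : Type*} [DivisionRing k] [AddCommGroup V] [Module k V]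
    {S : Set V} (hS : S.Infinite) {U : Submodule k V} (hU : U.FG) (hSU : S ⊆ U) :
    ∃ T ⊆ S, T.Infinite ∧ (vectorSpan k T).FG ∧ HasStableDirection T (vectorSpan k T) := by
  have : Module.Finite k U := Module.Finite.iff_fg.mpr hU
  have le_U : ∀ T ⊆ S, vectorSpan k T ≤ U := fun T hT ↦ by
    refine Submodule.span_le.mpr ?_
    rintro _ ⟨s, hs, t, ht, rfl⟩
    exact U.sub_mem (hSU (hT hs)) (hSU (hT ht))
  have candidates_nonempty : {T | T ⊆ S ∧ T.Infinite}.Nonempty := ⟨S, subset_rfl, hS⟩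
  obtain ⟨T, ⟨hTS, T_infinite⟩, T_minimal⟩ :=
    exists_minimalFor_of_wellFoundedLT _ (fun T : Set V ↦ Module.finrank k (vectorSpan k T))
      candidates_nonempty
  have : FiniteDimensional k (vectorSpan k T) := Submodule.finiteDimensional_of_le (le_U T hTS)
  refine ⟨T, hTS, T_infinite, Module.Finite.iff_fg.mp this, fun T' hT'T T'_infinite ↦ ?_⟩
  have vectorSpan_le := vectorSpan_mono k hT'T
  exact Submodule.eq_of_le_of_finrank_le vectorSpan_le
    (T_minimal ⟨hT'T.trans hTS, T'_infinite⟩ (Submodule.finrank_mono vectorSpan_le))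

lemma infinite_setOf_and {α : Type*} {S : Set α} (hS : S.Infinite) {p q : α → Prop}
    (hp : {s ∈ S | ¬ p s}.Finite) (hq : {s ∈ S | ¬ q s}.Finite) :
    {s ∈ S | p s ∧ q s}.Infinite := by
  refine (hS.sdiff (hp.union hq)).mono fun s hs ↦ ⟨hs.1, ?_⟩
  by_contra h
  exact hs.2 ((not_and_or.mp h).imp (⟨hs.1, ·⟩) (⟨hs.1, ·⟩))

namespace SchanuelConjecture

lemma not_isRelPrime_of_hasStableDirection (hSC : SchanuelConjecture) (hS : S.Infinite)
    (hU : HasStableDirection S U) (hfg : U.FG) (hF : ∀ s ∈ S, expSum F s = 0)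
    (hF' : ∀ s ∈ S, expSum F' s = 0) : ¬ IsRelPrime (expPoly F) (expPoly F') := by
  set G := frequenciesInto (algebraicClosure ℚ ℂ) U
  have isAlgebraic_exp : ∀ w ∈ G, ∀ u ∈ U, IsAlgebraic ℚ (exp (w * u)) := fun w hw u hu ↦
    mem_algebraicClosure_iff.mp (hw u hu)
  let T := {s ∈ S | SplitsAt F G s ∧ SplitsAt F' G s}
  have T_infinite : T.Infinite := infinite_setOf_and hS
    (finite_setOf_not_splitsAt_algebraicClosure hU hfg hF)
    (finite_setOf_not_splitsAt_algebraicClosure hU hfg hF')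
  by_cases! hG : ∃ w : ℂ, (G : Set ℂ) ⊆ Submodule.span ℚ {w}
  · obtain ⟨w, hw⟩ := hG
    obtain ⟨s, -, hs, hs'⟩ := T_infinite.nonempty
    exact not_isRelPrime_of_splitsAt hw hs hs'
  obtain ⟨w, hw, w_notMem⟩ := not_subset.mp (hG 0)
  obtain ⟨w', hw', w'_notMem⟩ := not_subset.mp (hG w)
  obtain ⟨s₀, hs₀, s₁, hs₁, hne⟩ := T_infinite.nontrivial
  have sub_mem : ∀ s ∈ T, s - s₀ ∈ U := fun s hs ↦ hU.sub_mem hS hs.1 hs₀.1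
  have sub_mem_span : ∀ s ∈ T, s - s₀ ∈ Submodule.span ℚ {s₁ - s₀} := fun s hs ↦ by
    have w_ne_zero : w ≠ 0 := fun h ↦ w_notMem (by simp [h])
    have hs₁₀ := sub_mem s₁ hs₁
    have hs' := sub_mem s hs
    exact (hSC.four_exponentials w_ne_zero (sub_ne_zero.mpr hne.symm) (isAlgebraic_exp w hw _ hs₁₀)
      (isAlgebraic_exp w hw _ hs') (isAlgebraic_exp w' hw' _ hs₁₀)
      (isAlgebraic_exp w' hw' _ hs')).resolve_left w'_notMem
  have finite_nonsplit {E : ℂ →₀ ℂ} (hE : ∀ s ∈ T, SplitsAt E G s) :=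
    finite_setOf_not_splitsAt_inf_torsionFrequencies
      (fun w hw ↦ isAlgebraic_exp w hw _ (sub_mem s₁ hs₁)) sub_mem_span hE
  obtain ⟨s, -, hs, hs'⟩ := (infinite_setOf_and T_infinite (finite_nonsplit fun s hs ↦ hs.2.1)
    (finite_nonsplit fun s hs ↦ hs.2.2)).nonempty
  exact not_isRelPrime_of_splitsAt (subset_trans inf_le_right
    (torsionFrequencies_subset_span (sub_ne_zero.mpr hne.symm))) hs hs'

lemma not_isRelPrime_of_infinite_of_subset_fg (hSC : SchanuelConjecture) (hS : S.Infinite)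
    (hfg : U.FG) (hSU : S ⊆ U) (hF : ∀ s ∈ S, expSum F s = 0) (hF' : ∀ s ∈ S, expSum F' s = 0) :
    ¬ IsRelPrime (expPoly F) (expPoly F') := by
  obtain ⟨T, hTS, T_infinite, span_fg, hT⟩ := exists_hasStableDirection hS hfg hSU
  exact hSC.not_isRelPrime_of_hasStableDirection T_infinite hT span_fg (fun s hs ↦ hF s (hTS hs))
    fun s hs ↦ hF' s (hTS hs)

end SchanuelConjecture

end FiniteRankZeros

section PrincipalKernels

open Polynomial in
lemma dvd_of_prime_of_map_eq_zero {R L : Type*} [CommRing R] [IsDomain R]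
    [UniqueFactorizationMonoid R] [Field L] {φ : R[X] →+* L}
    (hφ : Function.Injective (φ.comp C)) {H Q : R[X]} (H_prime : Prime H) (hH : φ H = 0)
    (hQ : φ Q = 0) : H ∣ Q := by
  have : NormalizedGCDMonoid R := Classical.choice inferInstance
  let K := FractionRing R
  have natDegree_ne_zero : H.natDegree ≠ 0 := fun hd ↦ by
    obtain ⟨c, rfl⟩ := natDegree_eq_zero.mp hd
    have : c = 0 := hφ (by simpa using hH)
    exact H_prime.ne_zero (by rw [this, C_0])
  have H_primitive := H_prime.irreducible.isPrimitive natDegree_ne_zero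
  let ψ : K[X] →+* L := eval₂RingHom (IsFractionRing.lift hφ) (φ X)
  have ψ_map (p : R[X]) : ψ (p.map (algebraMap R K)) = φ p := by
    have : ψ.comp (mapRingHom (algebraMap R K)) = φ := ringHom_ext (by simp [ψ]) (by simp [ψ])
    exact congr($this p)
  refine H_primitive.dvd_of_fraction_map_dvd_fraction_map (K := K) (by_contra fun hHQ ↦ ?_)
  have H_irreducible := (H_primitive.irreducible_iff_irreducible_map_fraction_map (K := K)).mp
    H_prime.irreducible
  obtain ⟨a, b, hab⟩ := H_irreducible.coprime_iff_not_dvd.mpr hHQ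
  have := congr(ψ $hab)
  simp [ψ_map, hH, hQ] at this

open Polynomial in
lemma exists_map_eq_zero_iff_dvd {R L : Type*} [CommRing R] [IsDomain R]
    [UniqueFactorizationMonoid R] [Field L] {φ : R[X] →+* L}
    (hφ : Function.Injective (φ.comp C)) : ∃ H : R[X], ∀ Q, φ Q = 0 ↔ H ∣ Q := by
  by_cases hker : RingHom.ker φ = ⊥
  · exact ⟨0, fun Q ↦ by rw [← RingHom.mem_ker, hker, Ideal.mem_bot, zero_dvd_iff]⟩
  obtain ⟨H, hH, H_prime⟩ := (RingHom.ker_isPrime φ).exists_mem_prime_of_ne_bot hker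
  refine ⟨H, fun Q ↦ ⟨dvd_of_prime_of_map_eq_zero hφ H_prime hH, fun hHQ ↦ ?_⟩⟩
  exact Ideal.mem_of_dvd _ hHQ hH

variable {σ F L : Type*} [Field F] [Field L] [Algebra F L]

open MvPolynomial in
lemma exists_aeval_option_eq_zero_iff_dvd {x : Option σ → L}
    (hx : AlgebraicIndependent F (x ∘ some)) :
    ∃ H : MvPolynomial (Option σ) F, ∀ Q, aeval x Q = 0 ↔ H ∣ Q := by
  let e := optionEquivLeft F σ
  let φ := ((aeval x).comp e.symm.toAlgHom).toRingHom
  have φ_C (p : MvPolynomial σ F) : φ (.C p) = aeval (x ∘ some) p := by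
    simp [φ, e, optionEquivLeft_symm_apply, aeval_rename]
  obtain ⟨H, hH⟩ := exists_map_eq_zero_iff_dvd (φ := φ) fun p q hpq ↦
    hx (by simpa only [RingHom.comp_apply, φ_C] using hpq)
  refine ⟨e.symm H, fun Q ↦ ?_⟩
  rw [← map_dvd_iff e, e.apply_symm_apply, ← hH]
  simp [φ]

open MvPolynomial in
lemma exists_aeval_eq_zero_iff_dvd {x : σ → L} {i : σ}
    (hx : AlgebraicIndependent F fun j : {j // j ≠ i} ↦ x j) :
    ∃ H : MvPolynomial σ F, ∀ Q, aeval x Q = 0 ↔ H ∣ Q := by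
  classical
  let e := Equiv.optionSubtypeNe i
  obtain ⟨H, hH⟩ := exists_aeval_option_eq_zero_iff_dvd (x := x ∘ e) hx
  refine ⟨renameEquiv F e H, fun Q ↦ ?_⟩
  rw [← map_dvd_iff (renameEquiv F e).symm, AlgEquiv.symm_apply_apply, ← hH,
    renameEquiv_symm, renameEquiv_apply, aeval_rename, Function.comp_assoc, e.self_comp_symm,
    Function.comp_id]

end PrincipalKernels

section AlgebraicRank

open AlgebraicIndependent (matroid)

variable {k K : Type*} [Field k] [Field K] [Algebra k K] {X Y : Set K}

/-- The relative algebraic closure in `K` of the subfield generated by `X` over `k`. Its elements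
form the closure of `X` in the matroid of algebraic independence. -/
def algClosure (k : Type*) {K : Type*} [Field k] [Field K] [Algebra k K] (X : Set K) :
    IntermediateField k K :=
  (algebraicClosure (IntermediateField.adjoin k X) K).restrictScalars k

lemma coe_algClosure (X : Set K) : (algClosure k X : Set K) = (matroid k K).closure X := by
  ext x
  rw [AlgebraicIndependent.matroid_closure_eq]
  exact mem_algebraicClosure_iff.trans IntermediateField.isAlgebraic_adjoin_iff

lemma subset_algClosure (X : Set K) : X ⊆ algClosure k X :=
  coe_algClosure (k := k) X ▸ (matroid k K).subset_closure X

lemma algClosure_le (h : X ⊆ algClosure k Y) : algClosure k X ≤ algClosure k Y := by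
  rw [← SetLike.coe_subset_coe, coe_algClosure, coe_algClosure]
  rw [coe_algClosure] at h
  exact (matroid k K).closure_subset_closure_of_subset_closure h

lemma eRk_le_eRk_of_subset_algClosure (h : X ⊆ algClosure k Y) :
    (matroid k K).eRk X ≤ (matroid k K).eRk Y := by
  rw [← (matroid k K).eRk_closure_eq Y, ← coe_algClosure]
  exact (matroid k K).eRk_mono h

lemma exp_mem_algClosure_of_mem_span {X A : Set ℂ} (hA : ∀ a ∈ A, exp a ∈ algClosure ℚ X) {a : ℂ}
    (ha : a ∈ Submodule.span ℚ A) : exp a ∈ algClosure ℚ X := by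
  simpa using exp_mul_mem_of_mem_span (H := (algClosure ℚ X).toSubmonoid)
    mem_algebraicClosure_of_pow_mem (algClosure ℚ X).inv_mem (w := 1) (by simpa using hA) ha

lemma algebraicIndepOn_sdiff_of_indep {I J : Set K} (hJ : (matroid k K).Indep J) (hIJ : I ⊆ J) :
    AlgebraicIndepOn (algClosure k I) id (J \ I) := by
  have adjoin_image := AlgebraicIndependent.adjoin_of_disjoint
    (AlgebraicIndependent.matroid_indep_iff.mp hJ) (s := (↑) ⁻¹' I) (t := (↑) ⁻¹' (J \ I))
    (disjoint_sdiff_right.preimage _)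
  have image_eq : (fun x : J ↦ id (x : K)) '' ((↑) ⁻¹' I) = I := by
    simpa using inter_eq_right.mpr hIJ
  rw [image_eq, ← IntermediateField.algebraicIndependent_adjoin_iff] at adjoin_image
  exact adjoin_image.algebraicClosure.comp (fun x : ↑(J \ I) ↦ ⟨⟨x, x.2.1⟩, x.2⟩)
    fun x y hxy ↦ Subtype.ext congr($hxy)

lemma exists_algebraicIndepOn_of_eRk_add_le (hX : X.Finite) {d : ℕ}
    (h : (matroid k K).eRk X + d ≤ (matroid k K).eRk (X ∪ Y)) :
    ∃ I ⊆ Y, d ≤ I.encard ∧ AlgebraicIndepOn (algClosure k X) id I := by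
  obtain ⟨B, hB⟩ := (matroid k K).exists_isBasis X
  obtain ⟨B', hB', hBB'⟩ := hB.indep.subset_isBasis_of_subset
    (hB.subset.trans subset_union_left : B ⊆ X ∪ Y)
  have algClosure_eq : algClosure k B = algClosure k X :=
    SetLike.coe_injective (by simpa only [coe_algClosure] using hB.closure_eq_closure)
  refine ⟨B' \ B, ?_, ?_, algClosure_eq ▸ algebraicIndepOn_sdiff_of_indep hB'.indep hBB'⟩
  · rintro x ⟨hx, hxB⟩
    refine (hB'.subset hx).resolve_left fun hxX ↦ hxB ?_
    exact hB.mem_of_insert_indep hxX (hB'.indep.subset (insert_subset hx hBB'))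
  · rw [hB.eRk_eq_encard, hB'.eRk_eq_encard, ← encard_sdiff_add_encard_of_subset hBB',
      add_comm] at h
    exact (ENat.add_le_add_iff_right (hX.subset hB.subset).encard_lt_top.ne).mp h

lemma exists_algebraicIndependent_of_eRk_add_le {ι : Type*} [Finite ι] {y : ι → K}
    (hX : X.Finite) {d : ℕ} (h : (matroid k K).eRk X + d ≤ (matroid k K).eRk (X ∪ range y)) :
    ∃ J : Finset ι, d ≤ J.card ∧ AlgebraicIndependent (algClosure k X) fun j : J ↦ y j := by
  obtain ⟨I, hI, card_le, hind⟩ := exists_algebraicIndepOn_of_eRk_add_le hX h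
  obtain ⟨J, rfl, hinj⟩ := exists_image_eq_injOn_of_subset_range hI
  lift J to Finset ι using toFinite J
  rw [hinj.encard_image, encard_coe_eq_coe_finsetCard] at card_le
  exact ⟨J, mod_cast card_le, (algebraicIndependent_image hinj).mpr hind⟩

lemma algebraicIndependent_of_eRk_add_card_le {ι : Type*} [Fintype ι] {y : ι → K} (hX : X.Finite)
    (h : (matroid k K).eRk X + Fintype.card ι ≤ (matroid k K).eRk (X ∪ range y)) :
    AlgebraicIndependent (algClosure k X) y := by
  obtain ⟨J, card_le, hJ⟩ := exists_algebraicIndependent_of_eRk_add_le hX h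
  obtain rfl : J = Finset.univ :=
    Finset.eq_univ_of_card J (le_antisymm J.card_le_univ card_le)
  exact hJ.comp (fun j ↦ ⟨j, Finset.mem_univ j⟩) fun i j hij ↦ by simpa using hij

lemma exists_algebraicIndependent_ne_of_eRk_add_card_le {ι : Type*} [Fintype ι] [Nonempty ι]
    {y : ι → K} (hX : X.Finite) {s : K} (h : (matroid k K).eRk X + Fintype.card ι ≤
      (matroid k K).eRk (X ∪ insert s (range y))) :
    ∃ i : ι, AlgebraicIndependent (algClosure k (insert s X)) fun j : {j // j ≠ i} ↦ y j := by
  classical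
  have card_eq : Fintype.card ι = 1 + (Fintype.card ι - 1) := by
    have := Fintype.card_pos (α := ι)
    lia
  have h' : (matroid k K).eRk (insert s X) + (Fintype.card ι - 1 : ℕ) ≤
      (matroid k K).eRk (insert s X ∪ range y) := by
    rw [insert_union, ← union_insert]
    refine le_trans ?_ h
    rw [card_eq, Nat.cast_add, ← add_assoc, Nat.add_sub_cancel_left]
    gcongr
    exact (matroid k K).eRk_insert_le_add_one s X
  obtain ⟨J, card_le, hJ⟩ := exists_algebraicIndependent_of_eRk_add_le (hX.insert s) h'
  obtain ⟨i, hi⟩ : ∃ i, ∀ j ∉ J, j = i := by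
    have card_compl : Jᶜ.card ≤ 1 := by
      rw [Finset.card_compl]
      lia
    obtain ⟨i, hi⟩ := Finset.card_le_one_iff_subset_singleton.mp card_compl
    exact ⟨i, fun j hj ↦ by simpa using hi (Finset.mem_compl.mpr hj)⟩
  exact ⟨i, hJ.comp (fun j : {j // j ≠ i} ↦ ⟨j, by_contra fun hj ↦ j.2 (hi _ hj)⟩)
    fun j j' hjj' ↦ Subtype.ext congr($hjj')⟩

lemma SchanuelConjecture.finrank_span_le_eRk (hSC : SchanuelConjecture) {X A : Set ℂ}
    (hA : A.Finite) (hAX : A ⊆ algClosure ℚ X) (hexp : ∀ a ∈ A, exp a ∈ algClosure ℚ X) :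
    Module.finrank ℚ (Submodule.span ℚ A) ≤ (matroid ℚ ℂ).eRk X := by
  obtain ⟨b, hb, span_b, b_indep⟩ := exists_linearIndependent ℚ A
  have := (hA.subset hb).fintype
  obtain ⟨t, ht, t_indep, card_le⟩ := hSC.exists_algebraicIndependent b_indep
  have finrank_eq : Module.finrank ℚ (Submodule.span ℚ A) = Fintype.card b := by
    rw [← span_b, ← finrank_span_eq_card b_indep, Subtype.range_coe]
  have t_subset : (t : Set ℂ) ⊆ algClosure ℚ X := fun x hx ↦ by
    obtain ⟨a, rfl⟩ | ⟨a, rfl⟩ := ht hx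
    · exact hAX (hb a.2)
    · exact hexp _ (hb a.2)
  calc (Module.finrank ℚ (Submodule.span ℚ A) : ℕ∞)
    _ ≤ (t : Set ℂ).encard := by
      rw [finrank_eq, encard_coe_eq_coe_finsetCard]
      exact mod_cast card_le
    _ = (matroid ℚ ℂ).eRk t :=
      (AlgebraicIndependent.matroid_indep_iff.mpr t_indep).eRk_eq_encard.symm
    _ ≤ (matroid ℚ ℂ).eRk X := eRk_le_eRk_of_subset_algClosure t_subset

end AlgebraicRank

section Lattices

variable {V : Type*} [AddCommGroup V] {S T : Set V}

lemma exists_linearIndependent_span_int_eq [Module ℚ V] (hT : T.Finite) :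
    ∃ (n : ℕ) (v : Fin n → V), LinearIndependent ℚ v ∧
      Submodule.span ℤ (range v) = Submodule.span ℤ T := by
  let L := Submodule.span ℤ T
  have : Module.Finite ℤ L := .span_of_finite ℤ hT
  have : Module.IsTorsionFree ℤ V := .trans ℚ
  let b := Module.finBasis ℤ L
  refine ⟨_, L.subtype ∘ b, ?_, ?_⟩
  · rw [← LinearIndependent.iff_fractionRing ℤ ℚ]
    exact b.linearIndependent.map' L.subtype L.ker_subtype
  · rw [range_comp, ← Submodule.map_span, b.span_eq, Submodule.map_top, Submodule.range_subtype]

lemma exists_add_mem_span_nat {x : V} (hx : x ∈ Submodule.span ℤ S) :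
    ∃ a ∈ Submodule.span ℕ S, x + a ∈ Submodule.span ℕ S := by
  rw [← Submodule.mem_toAddSubgroup, Submodule.span_int_eq_addSubgroupClosure] at hx
  induction hx using AddSubgroup.closure_induction with
  | mem x hx => exact ⟨0, zero_mem _, by simpa using Submodule.subset_span hx⟩
  | zero => exact ⟨0, zero_mem _, by simp⟩
  | add x y _ _ hx hy =>
    obtain ⟨a, ha, hxa⟩ := hx
    obtain ⟨b, hb, hyb⟩ := hy
    exact ⟨a + b, add_mem ha hb, add_add_add_comm x y a b ▸ add_mem hxa hyb⟩
  | neg x _ hx =>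
    obtain ⟨a, ha, hxa⟩ := hx
    exact ⟨x + a, hxa, by rwa [neg_add_cancel_left]⟩

lemma exists_forall_add_mem_span_nat (hT : T.Finite) (hTS : T ⊆ Submodule.span ℤ S) :
    ∃ a ∈ Submodule.span ℕ S, ∀ x ∈ T, x + a ∈ Submodule.span ℕ S := by
  induction T, hT using Set.Finite.induction_on with
  | empty => exact ⟨0, zero_mem _, by simp⟩
  | @insert x T _ _ ih =>
    obtain ⟨hx, hTS⟩ := insert_subset_iff.mp hTS
    obtain ⟨a, ha, hTa⟩ := ih hTS
    obtain ⟨b, hb, hxb⟩ := exists_add_mem_span_nat hx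
    refine ⟨a + b, add_mem ha hb, forall_mem_insert.mpr ⟨?_, fun t ht ↦ ?_⟩⟩
    · simpa only [add_comm a b, add_assoc] using add_mem hxb ha
    · simpa only [add_assoc] using add_mem (hTa t ht) hb

end Lattices

section ExpMonomials

open MvPolynomial (aeval)

variable {ι K : Type*} [Field K] [Algebra K ℂ] {v : ι → ℂ} {F F' : ℂ →₀ ℂ} {s : ℂ}

lemma isUnit_expMonomial (μ : ℂ) : IsUnit (expMonomial μ) :=
  .of_mul_eq_one (expMonomial (-μ)) (by rw [← expMonomial_add, add_neg_cancel, expMonomial_zero])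

lemma aeval_expMonomial_apply (P : MvPolynomial ι K) :
    (aeval (fun i ↦ expMonomial (v i)) P : ℂ → ℂ) s = aeval (fun i ↦ exp (v i * s)) P := by
  let evalAt : expPolys →ₐ[K] ℂ :=
    (Pi.evalAlgHom K (fun _ : ℂ ↦ ℂ) s).comp (expPolys.val.restrictScalars K)
  exact MvPolynomial.comp_aeval_apply _ evalAt P

lemma expMonomial_mem_range_aeval {μ : ℂ} (hμ : μ ∈ Submodule.span ℕ (range v)) :
    expMonomial μ ∈ (aeval (R := K) fun i ↦ expMonomial (v i)).range := by
  induction hμ using Submodule.span_induction with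
  | mem μ h =>
    obtain ⟨i, rfl⟩ := h
    exact ⟨.X i, MvPolynomial.aeval_X _ i⟩
  | zero => exact expMonomial_zero ▸ one_mem _
  | add μ ν _ _ hμ hν => exact expMonomial_add μ ν ▸ mul_mem hμ hν
  | smul n μ _ hμ =>
    induction n with
    | zero => rw [zero_smul, expMonomial_zero]; exact one_mem _
    | succ n ih => rw [succ_nsmul, expMonomial_add]; exact mul_mem ih hμ

lemma exists_aeval_expMonomial_eq (hF : ∀ μ, F μ ∈ range (algebraMap K ℂ))
    (hv : ↑F.support ⊆ (Submodule.span ℤ (range v) : Set ℂ)) :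
    ∃ (P : MvPolynomial ι K) (ν : ℂ),
      aeval (fun i ↦ expMonomial (v i)) P = expMonomial ν * expPoly F := by
  obtain ⟨ν, -, hν⟩ := exists_forall_add_mem_span_nat F.support.finite_toSet hv
  suffices expMonomial ν * expPoly F ∈ (aeval (R := K) fun i ↦ expMonomial (v i)).range by
    obtain ⟨P, hP⟩ := this
    exact ⟨P, ν, hP⟩
  rw [expPoly, Finset.mul_sum]
  refine sum_mem fun μ hμ ↦ ?_
  obtain ⟨c, hc⟩ := hF μ
  rw [mul_smul_comm, ← expMonomial_add, add_comm, ← hc, algebraMap_smul]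
  exact Subalgebra.smul_mem _ (expMonomial_mem_range_aeval (hν μ hμ)) c

-- The polynomials over `K` vanishing at `(exp (v i * s))ᵢ` are the multiples of a single one, which
-- turns into a common factor of `expPoly F` and `expPoly F'` with a zero at `s`.
lemma not_isRelPrime_of_algebraicIndependent {i : ι}
    (hind : AlgebraicIndependent K fun j : {j // j ≠ i} ↦ exp (v j * s))
    (hF : ∀ μ, F μ ∈ range (algebraMap K ℂ)) (hF' : ∀ μ, F' μ ∈ range (algebraMap K ℂ))
    (hv : ↑F.support ⊆ (Submodule.span ℤ (range v) : Set ℂ))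
    (hv' : ↑F'.support ⊆ (Submodule.span ℤ (range v) : Set ℂ))
    (hs : expSum F s = 0) (hs' : expSum F' s = 0) : ¬ IsRelPrime (expPoly F) (expPoly F') := by
  obtain ⟨H, hH⟩ := exists_aeval_eq_zero_iff_dvd (x := fun i ↦ exp (v i * s)) hind
  let h := aeval (fun i ↦ expMonomial (v i)) H
  have h_dvd {F : ℂ →₀ ℂ} (hF : ∀ μ, F μ ∈ range (algebraMap K ℂ))
      (hv : ↑F.support ⊆ (Submodule.span ℤ (range v) : Set ℂ)) (hs : expSum F s = 0) :
      h ∣ expPoly F := by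
    obtain ⟨P, ν, hP⟩ := exists_aeval_expMonomial_eq hF hv
    rw [← (isUnit_expMonomial ν).dvd_mul_left, ← hP]
    refine map_dvd _ ((hH P).mp ?_)
    rw [← aeval_expMonomial_apply, hP, Subalgebra.coe_mul, Pi.mul_apply, expPoly_apply, hs,
      mul_zero]
  intro hrel
  refine apply_ne_zero_of_isUnit (hrel (h_dvd hF hv hs) (h_dvd hF' hv' hs')) s ?_
  rw [aeval_expMonomial_apply]
  exact (hH H).mpr dvd_rfl

end ExpMonomials

section Extensions

open AlgebraicIndependent (matroid)
open MvPolynomial (aeval)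

variable {ι : Type*} {F F' : ℂ →₀ ℂ} {s : ℂ} {U : Submodule ℚ ℂ} {Λ X : Set ℂ} {u : ι → ℂ}

/-- Multiplication by `s` modulo `U`. -/
def mulMod (U : Submodule ℚ ℂ) (s : ℂ) : ℂ →ₗ[ℚ] ℂ ⧸ U :=
  U.mkQ ∘ₗ LinearMap.mulRight ℚ s

/-- Adjoining `s` and the numbers `exp (μ * s)`, `μ ∈ Λ`, to `X` raises the transcendence degree by
at least the dimension of the span of `Λ * s` modulo `U`. For `X` as in `adjoinExp` and `U` the
span of the exponents in `X`, this says that adjoining `s` does not lower the predimension. -/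
def IsStrongAt (Λ X : Set ℂ) (U : Submodule ℚ ℂ) (s : ℂ) : Prop :=
  (matroid ℚ ℂ).eRk X + Module.finrank ℚ (Submodule.span ℚ (mulMod U s '' Λ)) ≤
    (matroid ℚ ℂ).eRk (X ∪ insert s ((fun μ ↦ exp (μ * s)) '' Λ))

lemma exists_aeval_monomial_eq_exp {K : Type*} [Field K] [Algebra K ℂ]
    (hU : ∀ t ∈ U, exp t ∈ range (algebraMap K ℂ)) {x : ℂ}
    (hx : U.mkQ x ∈ Submodule.span ℕ (range fun i ↦ U.mkQ (u i))) :
    ∃ (n : ι →₀ ℕ) (c : K), (n.sum fun i k ↦ k • U.mkQ (u i)) = U.mkQ x ∧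
      aeval (fun i ↦ exp (u i)) (MvPolynomial.monomial n c) = exp x := by
  obtain ⟨n, hn⟩ := Finsupp.mem_span_range_iff_exists_finsupp.mp hx
  have mem_U : x - n.sum (fun i k ↦ k • u i) ∈ U := by
    rw [← U.ker_mkQ, LinearMap.mem_ker, map_sub, map_finsuppSum]
    simpa only [map_nsmul, sub_eq_zero] using hn.symm
  obtain ⟨c, hc⟩ := hU _ mem_U
  refine ⟨n, c, hn, ?_⟩
  simp only [MvPolynomial.aeval_monomial, hc, ← exp_nsmul, Finsupp.prod, Finsupp.sum, ← exp_sum,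
    ← exp_add, sub_add_cancel]

lemma expSum_ne_zero_of_algebraicIndependent {K : Type*} [Field K] [Algebra K ℂ]
    (hu : AlgebraicIndependent K fun i ↦ exp (u i)) (hU : ∀ t ∈ U, exp t ∈ range (algebraMap K ℂ))
    (hF : ∀ μ, F μ ∈ range (algebraMap K ℂ)) (hF0 : F ≠ 0)
    (hspan : mulMod U s '' F.support ⊆ Submodule.span ℤ (range fun i ↦ U.mkQ (u i)))
    (hinj : InjOn (mulMod U s) F.support) : expSum F s ≠ 0 := by
  classical
  obtain ⟨a, -, ha⟩ := exists_forall_add_mem_span_nat (F.support.finite_toSet.image _) hspan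
  obtain ⟨x, rfl⟩ := U.mkQ_surjective a
  have hx (μ : ℂ) (hμ : μ ∈ F.support) := exists_aeval_monomial_eq_exp hU
    (x := μ * s + x) (by simpa [mulMod] using ha _ (mem_image_of_mem _ hμ))
  choose! n c hn hc using hx
  choose d hd using hF
  have n_inj : InjOn n F.support := fun μ hμ ν hν hμν ↦ hinj hμ hν <|
    add_right_cancel (b := U.mkQ x) <| by
      simpa only [map_add] using! (hn μ hμ).symm.trans (hμν ▸ hn ν hν)
  let P := ∑ μ ∈ F.support, d μ • MvPolynomial.monomial (n μ) (c μ)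
  have aeval_P : aeval (fun i ↦ exp (u i)) P = expSum F s * exp x := by
    rw [map_sum, expSum, Finset.sum_mul]
    refine Finset.sum_congr rfl fun μ hμ ↦ ?_
    rw [map_smul, hc μ hμ, Algebra.smul_def, hd, exp_add, mul_assoc]
  intro hs
  have P_eq_zero : P = 0 := hu (by rw [aeval_P, hs, zero_mul, map_zero])
  obtain ⟨μ, hμ⟩ := Finsupp.support_nonempty_iff.mpr hF0
  have coeff_P : P.coeff (n μ) = d μ * c μ := by
    rw [MvPolynomial.coeff_sum, Finset.sum_eq_single_of_mem μ hμ]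
    · simp
    · intro ν hν hνμ
      simp [MvPolynomial.coeff_monomial, n_inj.ne hν hμ hνμ]
  have d_ne_zero : d μ ≠ 0 := fun h ↦ Finsupp.mem_support_iff.mp hμ (by rw [← hd, h, map_zero])
  have c_ne_zero : c μ ≠ 0 := fun h ↦ exp_ne_zero (μ * s + x) (by rw [← hc μ hμ, h]; simp)
  exact mul_ne_zero d_ne_zero c_ne_zero (by rw [← coeff_P, P_eq_zero, MvPolynomial.coeff_zero])

lemma exp_mem_algClosure_of_mkQ_mem_span (hU : ∀ t ∈ U, exp t ∈ algClosure ℚ X) {x : ℂ}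
    (hx : U.mkQ x ∈ Submodule.span ℚ (range fun i ↦ U.mkQ (u i))) :
    exp x ∈ algClosure ℚ (X ∪ range fun i ↦ exp (u i)) := by
  have hle : algClosure ℚ X ≤ algClosure ℚ (X ∪ range fun i ↦ exp (u i)) :=
    algClosure_le (subset_union_left.trans (subset_algClosure _))
  have hx' : x ∈ Submodule.span ℚ (U ∪ range u) := by
    rw [range_comp', ← Submodule.map_span] at hx
    rwa [Submodule.span_union, Submodule.span_eq, ← Submodule.comap_map_mkQ]
  refine exp_mem_algClosure_of_mem_span ?_ hx'
  rintro a (ha | ⟨i, rfl⟩)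
  · exact hle (hU a ha)
  · exact subset_algClosure _ (.inr ⟨i, rfl⟩)

lemma finrank_span_eq_of_span_int_eq {V : Type*} [AddCommGroup V] [Module ℚ V] {n : ℕ}
    {b : Fin n → V} (hb : LinearIndependent ℚ b) {S : Set V}
    (h : Submodule.span ℤ (range b) = Submodule.span ℤ S) :
    Module.finrank ℚ (Submodule.span ℚ S) = n := by
  rw [← Submodule.span_span_of_tower ℤ ℚ, ← h, Submodule.span_span_of_tower,
    finrank_span_eq_card hb, Fintype.card_fin]

lemma IsStrongAt.expSum_ne_zero (hs : IsStrongAt Λ X U s) (hsX : s ∈ algClosure ℚ X)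
    (hX : X.Finite) (hΛ : Λ.Finite) (hU : ∀ t ∈ U, exp t ∈ algClosure ℚ X)
    (hF : ∀ μ, F μ ∈ algClosure ℚ X) (hFΛ : ↑F.support ⊆ Λ) (hF0 : F ≠ 0)
    (hinj : InjOn (mulMod U s) F.support) : expSum F s ≠ 0 := by
  obtain ⟨n, b, hb, span_b⟩ := exists_linearIndependent_span_int_eq (hΛ.image (mulMod U s))
  choose u hu using fun i ↦ U.mkQ_surjective (b i)
  obtain rfl : (fun i ↦ U.mkQ (u i)) = b := funext hu
  have exp_u_indep : AlgebraicIndependent (algClosure ℚ X) fun i ↦ exp (u i) := by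
    refine algebraicIndependent_of_eRk_add_card_le hX ?_
    rw [IsStrongAt, finrank_span_eq_of_span_int_eq hb span_b] at hs
    rw [Fintype.card_fin]
    refine hs.trans (eRk_le_eRk_of_subset_algClosure ?_)
    have X_subset : X ⊆ algClosure ℚ (X ∪ range fun i ↦ exp (u i)) :=
      subset_union_left.trans (subset_algClosure _)
    refine union_subset X_subset (insert_subset (algClosure_le X_subset hsX) ?_)
    rintro _ ⟨μ, hμ, rfl⟩
    refine exp_mem_algClosure_of_mkQ_mem_span hU (Submodule.span_le_restrictScalars ℤ ℚ _ ?_)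
    rw [span_b]
    exact Submodule.subset_span ⟨μ, hμ, rfl⟩
  refine expSum_ne_zero_of_algebraicIndependent exp_u_indep (fun t ht ↦ ⟨⟨_, hU t ht⟩, rfl⟩)
    (fun μ ↦ ⟨⟨_, hF μ⟩, rfl⟩) hF0 ?_ hinj
  exact (image_mono hFΛ).trans (Submodule.subset_span.trans span_b.ge)

lemma exists_mem_support_ne_zero_of_expSum_eq_zero (hF : F ≠ 0) (hs : expSum F s = 0) :
    ∃ μ ∈ F.support, μ ≠ 0 := by
  obtain ⟨ν, hν⟩ := Finsupp.support_nonempty_iff.mpr hF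
  by_contra! h
  rw [expSum, Finset.eq_singleton_iff_unique_mem.mpr ⟨hν, fun μ hμ ↦ (h μ hμ).trans (h ν hν).symm⟩,
    Finset.sum_singleton] at hs
  exact mul_ne_zero (Finsupp.mem_support_iff.mp hν) (exp_ne_zero _) hs

lemma IsStrongAt.exists_algebraicIndependent {n : ℕ} [NeZero n] {v : Fin n → ℂ}
    (hs : IsStrongAt Λ X U s) (hX : X.Finite) (hv : LinearIndependent ℚ v)
    (span_v : Submodule.span ℤ (range v) = Submodule.span ℤ Λ)
    (hinj : Disjoint (Submodule.span ℚ Λ) (mulMod U s).ker) :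
    ∃ i : Fin n, AlgebraicIndependent (algClosure ℚ (insert s X))
      fun j : {j // j ≠ i} ↦ exp (v j * s) := by
  have span_rat_v : Submodule.span ℚ (range v) = Submodule.span ℚ Λ := by
    rw [← Submodule.span_span_of_tower ℤ ℚ, span_v, Submodule.span_span_of_tower]
  have finrank_eq : Module.finrank ℚ (Submodule.span ℚ (mulMod U s '' Λ)) = n := by
    rw [← Submodule.map_span, ← span_rat_v, Submodule.map_span, ← range_comp,
      finrank_span_eq_card (hv.map (span_rat_v ▸ hinj)), Fintype.card_fin]
  rw [IsStrongAt, finrank_eq] at hs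
  refine exists_algebraicIndependent_ne_of_eRk_add_card_le hX (y := fun i ↦ exp (v i * s)) ?_
  rw [Fintype.card_fin]
  refine hs.trans (eRk_le_eRk_of_subset_algClosure ?_)
  rw [← singleton_union, ← singleton_union, ← union_assoc, ← union_assoc]
  refine union_subset (subset_union_left.trans (subset_algClosure _)) ?_
  rintro _ ⟨μ, hμ, rfl⟩
  have hμ' : μ ∈ Submodule.span ℚ (range v) := span_rat_v ▸ Submodule.subset_span hμ
  refine exp_mem_algClosure_of_mem_span ?_
    (Submodule.apply_mem_span_image_of_mem_span (LinearMap.mulRight ℚ s) hμ')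
  rintro _ ⟨_, ⟨i, rfl⟩, rfl⟩
  exact subset_algClosure _ (.inr ⟨i, rfl⟩)

lemma IsStrongAt.not_isRelPrime (hs : IsStrongAt Λ X U s) (hX : X.Finite) (hΛ : Λ.Finite)
    (hinj : Disjoint (Submodule.span ℚ Λ) (mulMod U s).ker)
    (hF : ∀ μ, F μ ∈ algClosure ℚ X) (hF' : ∀ μ, F' μ ∈ algClosure ℚ X)
    (hFΛ : ↑F.support ⊆ Λ) (hFΛ' : ↑F'.support ⊆ Λ) (hF0 : F ≠ 0) (hFs : expSum F s = 0)
    (hFs' : expSum F' s = 0) : ¬ IsRelPrime (expPoly F) (expPoly F') := by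
  obtain ⟨n, v, hv, span_v⟩ := exists_linearIndependent_span_int_eq hΛ
  have Λ_subset : Λ ⊆ Submodule.span ℤ (range v) := Submodule.subset_span.trans span_v.ge
  have : NeZero n := ⟨by
    rintro rfl
    obtain ⟨μ, hμ, μ_ne_zero⟩ := exists_mem_support_ne_zero_of_expSum_eq_zero hF0 hFs
    exact μ_ne_zero (by simpa using Λ_subset (hFΛ hμ))⟩
  obtain ⟨i, hi⟩ := hs.exists_algebraicIndependent hX hv span_v hinj
  have mem_range {z : ℂ} (hz : z ∈ algClosure ℚ X) :
      z ∈ range (algebraMap (algClosure ℚ (insert s X)) ℂ) :=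
    ⟨⟨z, algClosure_le ((subset_insert s X).trans (subset_algClosure _)) hz⟩, rfl⟩
  exact not_isRelPrime_of_algebraicIndependent hi (fun μ ↦ mem_range (hF μ))
    (fun μ ↦ mem_range (hF' μ)) (hFΛ.trans Λ_subset) (hFΛ'.trans Λ_subset) hFs hFs'

lemma IsStrongAt.not_injOn_mulMod (hs : IsStrongAt Λ X U s) (hX : X.Finite) (hΛ : Λ.Finite)
    (hΛX : Λ ⊆ algClosure ℚ X) (hUX : (U : Set ℂ) ⊆ algClosure ℚ X)
    (hU : ∀ t ∈ U, exp t ∈ algClosure ℚ X)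
    (hF : ∀ μ, F μ ∈ algClosure ℚ X) (hF' : ∀ μ, F' μ ∈ algClosure ℚ X)
    (hFΛ : ↑F.support ⊆ Λ) (hFΛ' : ↑F'.support ⊆ Λ) (hF0 : F ≠ 0) (hFs : expSum F s = 0)
    (hFs' : expSum F' s = 0) (hrel : IsRelPrime (expPoly F) (expPoly F')) :
    ¬ InjOn (mulMod U s) F.support := by
  have not_disjoint : ¬ Disjoint (Submodule.span ℚ Λ) (mulMod U s).ker := fun h ↦
    hs.not_isRelPrime hX hΛ h hF hF' hFΛ hFΛ' hF0 hFs hFs' hrel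
  obtain ⟨w, hwΛ, hwU, hw⟩ : ∃ w ∈ Submodule.span ℚ Λ, w * s ∈ U ∧ w ≠ 0 := by
    simpa [Submodule.disjoint_def, mulMod] using not_disjoint
  have w_mem : w ∈ algClosure ℚ X :=
    Submodule.span_le (p := (algClosure ℚ X).toSubmodule).mpr hΛX hwΛ
  have s_mem : s ∈ algClosure ℚ X := by
    simpa [hw] using div_mem (hUX hwU) w_mem
  exact fun hinj ↦ hs.expSum_ne_zero s_mem hX hΛ hU hF hFΛ hF0 hinj hFs

end Extensions

section Predimension

open AlgebraicIndependent (matroid)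
open scoped Pointwise

lemma finrank_sup_eq_add_finrank_map_mkQ {k V : Type*} [DivisionRing k] [AddCommGroup V]
    [Module k V] (U W : Submodule k V) [FiniteDimensional k U] [FiniteDimensional k W] :
    Module.finrank k ↥(U ⊔ W) = Module.finrank k U + Module.finrank k (W.map U.mkQ) := by
  have rank_nullity := (U.mkQ.domRestrict (U ⊔ W)).finrank_range_add_finrank_ker
  have range_eq : (U.mkQ.domRestrict (U ⊔ W)).range = W.map U.mkQ := by
    rw [LinearMap.range_domRestrict, Submodule.map_sup, U.mkQ_map_self, bot_sup_eq]
  have ker_eq : (U.mkQ.domRestrict (U ⊔ W)).ker = U.submoduleOf (U ⊔ W) := by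
    rw [LinearMap.ker_domRestrict, U.ker_mkQ, Submodule.submoduleOf]
  rw [range_eq, ker_eq, (Submodule.submoduleOfEquivOfLe le_sup_left).finrank_eq] at rank_nullity
  rw [← rank_nullity, add_comm]

variable {Λ C : Set ℂ} {T : Finset ℂ}

/-- The set `C` enlarged by `T` and the numbers `exp (μ * t)` with `μ ∈ Λ` and `t ∈ T`. -/
def adjoinExp (Λ C T : Set ℂ) : Set ℂ :=
  C ∪ T ∪ exp '' (Λ * T)

/-- The predimension of `T` in the sense of Hrushovski and Zilber, over the constants `C` and with
the exponents restricted to `Λ * T`. Under Schanuel's Conjecture the subtraction is not truncated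
when `Λ ⊆ C`, and the rank is finite when `Λ` and `C` are. -/
def predimension (Λ C : Set ℂ) (T : Finset ℂ) : ℕ :=
  ((matroid ℚ ℂ).eRk (adjoinExp Λ C T)).toNat -
    Module.finrank ℚ (Submodule.span ℚ (Λ * T : Set ℂ))

lemma adjoinExp_finite (hΛ : Λ.Finite) (hC : C.Finite) : (adjoinExp Λ C T).Finite :=
  (hC.union T.finite_toSet).union ((hΛ.mul T.finite_toSet).image exp)

lemma mul_subset_algClosure_adjoinExp (hΛC : Λ ⊆ C) :
    Λ * T ⊆ (algClosure ℚ (adjoinExp Λ C T) : Set ℂ) := by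
  rintro _ ⟨μ, hμ, t, ht, rfl⟩
  exact mul_mem (subset_algClosure _ (.inl (.inl (hΛC hμ)))) (subset_algClosure _ (.inl (.inr ht)))

lemma exp_mem_algClosure_adjoinExp {a : ℂ} (ha : a ∈ (Λ * T : Set ℂ)) :
    exp a ∈ algClosure ℚ (adjoinExp Λ C T) :=
  subset_algClosure _ (.inr (mem_image_of_mem exp ha))

lemma SchanuelConjecture.eRk_adjoinExp (hSC : SchanuelConjecture) (hΛ : Λ.Finite) (hC : C.Finite)
    (hΛC : Λ ⊆ C) : (matroid ℚ ℂ).eRk (adjoinExp Λ C T) =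
      (Module.finrank ℚ (Submodule.span ℚ (Λ * T : Set ℂ)) + predimension Λ C T : ℕ) := by
  have finrank_le := hSC.finrank_span_le_eRk (hΛ.mul T.finite_toSet)
    (mul_subset_algClosure_adjoinExp hΛC) fun _ ↦ exp_mem_algClosure_adjoinExp (C := C)
  have rank_ne_top := Matroid.eRk_ne_top_iff.mpr
    ((matroid ℚ ℂ).isRkFinite_of_finite (adjoinExp_finite (T := T) hΛ hC))
  rw [predimension]
  lift (matroid ℚ ℂ).eRk (adjoinExp Λ C T) to ℕ using rank_ne_top with r
  rw [ENat.toNat_natCast, Nat.add_sub_cancel' (mod_cast finrank_le)]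

lemma adjoinExp_insert (s : ℂ) (T : Set ℂ) : adjoinExp Λ C (insert s T) =
    adjoinExp Λ C T ∪ insert s ((fun μ ↦ exp (μ * s)) '' Λ) := by
  rw [adjoinExp, adjoinExp, insert_eq s T, mul_union, mul_singleton, image_union, image_image,
    insert_eq]
  ac_rfl

lemma finrank_span_mul_insert (hΛ : Λ.Finite) (s : ℂ) :
    Module.finrank ℚ (Submodule.span ℚ (Λ * insert s (T : Set ℂ))) =
      Module.finrank ℚ (Submodule.span ℚ (Λ * T : Set ℂ)) +
        Module.finrank ℚ (Submodule.span ℚ (mulMod (Submodule.span ℚ (Λ * T)) s '' Λ)) := by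
  have := FiniteDimensional.span_of_finite ℚ (hΛ.mul T.finite_toSet)
  have := FiniteDimensional.span_of_finite ℚ (hΛ.mul (finite_singleton s))
  rw [insert_eq, union_comm, mul_union, Submodule.span_union, finrank_sup_eq_add_finrank_map_mkQ,
    Submodule.map_span, mul_singleton, image_image]
  rfl

lemma SchanuelConjecture.exists_forall_isStrongAt (hSC : SchanuelConjecture) (hΛ : Λ.Finite)
    (hC : C.Finite) (hΛC : Λ ⊆ C) : ∃ T : Finset ℂ, ∀ s,
      IsStrongAt Λ (adjoinExp Λ C T) (Submodule.span ℚ (Λ * T)) s := by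
  classical
  refine ⟨Function.argmin (predimension Λ C), fun s ↦ ?_⟩
  set T := Function.argmin (predimension Λ C)
  have minimal : predimension Λ C T ≤ predimension Λ C (insert s T) :=
    Function.argmin_le (predimension Λ C) _
  rw [IsStrongAt, ← adjoinExp_insert, ← Finset.coe_insert, hSC.eRk_adjoinExp hΛ hC hΛC,
    hSC.eRk_adjoinExp hΛ hC hΛC, Finset.coe_insert, finrank_span_mul_insert hΛ]
  norm_cast
  lia

end Predimension

section CommonZeros

open scoped Pointwise

variable {F F' : ℂ →₀ ℂ}

lemma SchanuelConjecture.exists_fg_forall_not_injOn_mulMod (hSC : SchanuelConjecture) (hF : F ≠ 0)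
    (hrel : IsRelPrime (expPoly F) (expPoly F')) :
    ∃ U : Submodule ℚ ℂ, U.FG ∧
      ∀ s, expSum F s = 0 → expSum F' s = 0 → ¬ InjOn (mulMod U s) F.support := by
  let Λ : Set ℂ := F.support ∪ F'.support
  let C : Set ℂ := Λ ∪ (range F ∪ range F')
  have hΛ : Λ.Finite := F.support.finite_toSet.union F'.support.finite_toSet
  have hC : C.Finite := hΛ.union (F.finite_range.union F'.finite_range)
  obtain ⟨T, hT⟩ := hSC.exists_forall_isStrongAt hΛ hC subset_union_left
  have C_subset : C ⊆ algClosure ℚ (adjoinExp Λ C T) :=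
    (subset_union_left.trans subset_union_left).trans (subset_algClosure _)
  refine ⟨Submodule.span ℚ (Λ * T), Submodule.fg_span (hΛ.mul T.finite_toSet),
    fun s hFs hFs' ↦ ?_⟩
  exact (hT s).not_injOn_mulMod (adjoinExp_finite hΛ hC) hΛ (subset_union_left.trans C_subset)
    (Submodule.span_le (p := (algClosure ℚ (adjoinExp Λ C T)).toSubmodule).mpr
      (mul_subset_algClosure_adjoinExp subset_union_left))
    (fun _ ↦ exp_mem_algClosure_of_mem_span fun _ ↦ exp_mem_algClosure_adjoinExp)
    (fun μ ↦ C_subset (.inr (.inl ⟨μ, rfl⟩))) (fun μ ↦ C_subset (.inr (.inr ⟨μ, rfl⟩)))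
    subset_union_left subset_union_right hF hFs hFs' hrel

lemma SchanuelConjecture.finite_setOf_common_zero_mul_mem (hSC : SchanuelConjecture)
    (hrel : IsRelPrime (expPoly F) (expPoly F')) {U : Submodule ℚ ℂ} (hU : U.FG) {w : ℂ}
    (hw : w ≠ 0) : {s | (expSum F s = 0 ∧ expSum F' s = 0) ∧ w * s ∈ U}.Finite := by
  by_contra hinf
  refine hSC.not_isRelPrime_of_infinite_of_subset_fg hinf (hU.map (LinearMap.mulLeft ℚ w⁻¹))
    (fun s hs ↦ ⟨w * s, hs.2, ?_⟩) (fun s hs ↦ hs.1.1) (fun s hs ↦ hs.1.2) hrel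
  exact inv_mul_cancel_left₀ hw s

theorem shapiro_distinct_irreducibles_general (hSC : SchanuelConjecture) {f g : expPolys}
    (hfg : IsRelPrime f g) : {z : ℂ | (f : ℂ → ℂ) z = 0 ∧ (g : ℂ → ℂ) z = 0}.Finite := by
  classical
  obtain ⟨F, rfl⟩ := expPoly_surjective f
  obtain ⟨F', rfl⟩ := expPoly_surjective g
  obtain rfl | hF := eq_or_ne F 0
  · have hg : IsUnit (expPoly F') := isRelPrime_zero_left.mp (by simpa [expPoly] using hfg)
    exact finite_empty.subset fun z hz ↦ apply_ne_zero_of_isUnit hg z hz.2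
  simp only [expPoly_apply]
  obtain ⟨U, hU, not_inj⟩ := hSC.exists_fg_forall_not_injOn_mulMod hF hfg
  refine (F.support.offDiag.finite_toSet.biUnion fun p hp ↦
    hSC.finite_setOf_common_zero_mul_mem hfg hU (w := p.1 - p.2) ?_).subset fun s hs ↦ ?_
  · exact sub_ne_zero.mpr (Finset.mem_offDiag.mp hp).2.2
  · obtain ⟨μ, hμ, ν, hν, heq, hne⟩ : ∃ μ ∈ F.support, ∃ ν ∈ F.support,
        mulMod U s μ = mulMod U s ν ∧ μ ≠ ν := by
      simpa [InjOn] using not_inj s hs.1 hs.2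
    have mem_U : (μ - ν) * s ∈ U := by
      rw [sub_mul]
      exact (Submodule.Quotient.eq U).mp heq
    exact mem_biUnion (x := (μ, ν)) (Finset.mem_offDiag.mpr ⟨hμ, hν, hne⟩) ⟨hs, mem_U⟩

end CommonZeros

/-- Assuming Schanuel's Conjecture: two irreducible exponential polynomials which are not
unit multiples of each other have only finitely many common zeros. -/
theorem shapiro_distinct_irreducibles (hSC : SchanuelConjecture)
    (f g : ℂ → ℂ) (hf : EIrreducible f) (hg : EIrreducible g)
    (hne : ¬ ∃ u : ℂ → ℂ, EUnit u ∧ f = u * g) :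
    {z : ℂ | f z = 0 ∧ g z = 0}.Finite :=
  shapiro_distinct_irreducibles_general hSC (f := ⟨f, hf.1⟩) (g := ⟨g, hg.1⟩)
    (isRelPrime_of_eIrreducible hf hg hne)
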